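/- In the Flat regime (n^{3/2}V(A(n))/k(n) → 0 and m(n)/(k(n)·n^{1/2}) → c for a fixed constant c > 0, with k(n)/√n → ∞), fix ε > 0 and set μ_F = kn/m − k²n/(2m²). Then both under ST(m,n) and under PL_A(m,n), with probability tending to 1 as n → ∞ the sampled configuration Z satisfies simultaneously: (i) if F_A(Z) ≥ μ_F + ε then ST(Z) > PL_A(Z), and (ii) if F_A(Z) ≤ μ_F − ε then PL_A(Z) > ST(Z). -/

import Mathlib

/-!
The claim follows from one estimate: with high probability, under both laws,
`log (PL_A(Z)/ST(Z)) = (μ_F - F_A(Z))/2 + o(1)` (`logLR_tendsto`). If `F_A` differs from `μ_F` by at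
least `ε`, the sign of the log-likelihood ratio is then determined (`good_eventually`).

Write `d = m/n`, `μ = k/n`, `δ = A - μ`, `w = Z - d` and `u = w + 1/2`. The flat regime gives
`μ √n/d → 1/c`, `∑ δ² = o(d)` and, because the planting is integral, `μ ≥ 1/2` eventually, whence
`√n = O(d)` and `d → ∞` (`scal_of_flat`).

*Probabilistic part.* `ballFilter m` is the filter of events that have probability tending to `1`
under `ST(m(n), n)`, so statements with high probability become `∀ᶠ` statements. The Efron–Stein inequality and the exact
central moments of the binomial law give concentration of `∑ w²`, `∑ w³`, `∑ w⁴`, `∑ δ w` and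
`∑ δ w²`, and a bound for `∑ w⁶` (`Conc`, `conc_ball`). The planted law is the standard law with
`m - k` balls translated by `A`, and these estimates persist under the change of mean load and the
translation (`Conc.rescale`, `Conc.shift`, `conc_planted`).

*Analytic part.* The likelihood ratio is `∏ (z_i)_{a_i} · n^k / (m)_k` with falling factorials. By the
midpoint rule with its `1/(24 x²)` correction, the logarithm of `(z_i)_{a_i}` is an integral of `log`
over `[d - μ + u_i - δ_i, d + u_i]` (`T1_tendsto`), and that of `(m)_k / n^k` is `n` times the integral
over `[d - μ, d]` (`big_tendsto`). Replacing `δ` by `0` costs `o(1)` (`T3_tendsto`), as does replacing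
the integrals by their fourth order expansions in `u` (`T2_tendsto`). Inserting the typical values of
the power sums, all terms that are not `o(1)` cancel except `(μ_F - F_A)/2` (`main_tendsto`).
-/

open Finset Filter Topology

/-- Probability of configuration `z` of `m` balls in `n` bins under the standard
(uniform multinomial) distribution ST(m,n). -/
noncomputable def stProb (n m : ℕ) (z : Fin n → ℕ) : ℝ :=
  if ∑ i, z i = m then
    ((Nat.factorial m : ℝ) / ∏ i, (Nat.factorial (z i) : ℝ)) * ((n : ℝ))⁻¹ ^ m
  else 0

/-- Probability of configuration `z` of `m` balls in `n` bins under the planted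
distribution PL_A(m,n) with planting `a`. -/
noncomputable def plProb (n m : ℕ) (a : Fin n → ℕ) (z : Fin n → ℕ) : ℝ :=
  if (∑ i, z i = m) ∧ (∀ i, a i ≤ z i) then
    ((Nat.factorial (m - ∑ i, a i) : ℝ) / ∏ i, (Nat.factorial (z i - a i) : ℝ)) *
      ((n : ℝ))⁻¹ ^ (m - ∑ i, a i)
  else 0

/-- Expectation of a statistic `T` with respect to a probability function `p` on
configurations. -/
noncomputable def expec {n : ℕ} (p : (Fin n → ℕ) → ℝ) (T : (Fin n → ℕ) → ℝ) : ℝ :=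
  ∑' z : Fin n → ℕ, p z * T z

/-- Variance of a statistic `T` with respect to a probability function `p`. -/
noncomputable def varOf {n : ℕ} (p : (Fin n → ℕ) → ℝ) (T : (Fin n → ℕ) → ℝ) : ℝ :=
  ∑' z : Fin n → ℕ, p z * (T z - expec p T) ^ 2

/-- Probability of a set `s` of configurations with respect to a probability
function `p`. -/
noncomputable def probOf {n : ℕ} (p : (Fin n → ℕ) → ℝ) (s : Set (Fin n → ℕ)) : ℝ :=
  ∑' z : Fin n → ℕ, Set.indicator s p z

/-- `V(A) = (Σ_i a_i²)/n − k²/n²` where `k = Σ_i a_i`. -/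
noncomputable def plantV (n : ℕ) (a : Fin n → ℕ) : ℝ :=
  (∑ i, (a i : ℝ) ^ 2) / n - ((∑ i, (a i : ℝ)) / n) ^ 2

/-- `q_i = (n/m)(z_i − m/n)`. -/
noncomputable def qStat (n m : ℕ) (z : Fin n → ℕ) (i : Fin n) : ℝ :=
  ((n : ℝ) / m) * ((z i : ℝ) - (m : ℝ) / n)

/-- The Hilly-regime statistic `H_A(Z) = Σ_i a_i q_i`. -/
noncomputable def HStat (n m : ℕ) (a : Fin n → ℕ) (z : Fin n → ℕ) : ℝ :=
  ∑ i, (a i : ℝ) * qStat n m z i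

/-- The Flat-regime statistic `F_A(Z) = Σ_i a_i q_i²`. -/
noncomputable def FStat (n m : ℕ) (a : Fin n → ℕ) (z : Fin n → ℕ) : ℝ :=
  ∑ i, (a i : ℝ) * qStat n m z i ^ 2

/-- The Intermediate-regime statistic `I_A(Z) = Σ_i a_i q_i − (1/2) Σ_i a_i q_i²`. -/
noncomputable def IStat (n m : ℕ) (a : Fin n → ℕ) (z : Fin n → ℕ) : ℝ :=
  HStat n m a z - (1/2) * FStat n m a z

/-- The standard normal cumulative distribution function `Φ`. -/
noncomputable def stdNormalCDF (x : ℝ) : ℝ :=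
  ∫ t in Set.Iic x, Real.exp (-t ^ 2 / 2) / Real.sqrt (2 * Real.pi)

/-- Total variation distance `TV_A(m,n)` between ST(m,n) and PL_A(m,n). -/
noncomputable def tvDist (n m : ℕ) (a : Fin n → ℕ) : ℝ :=
  (1/2) * ∑' z : Fin n → ℕ, |stProb n m z - plProb n m a z|

/-- The Flat regime: `n^{3/2} V(A)/k → 0` and `m/(k n^{1/2}) → c`. -/
def FlatRegime (A : (n : ℕ) → Fin n → ℕ) (m k : ℕ → ℕ) (c : ℝ) : Prop :=
  Tendsto (fun n : ℕ => (n : ℝ) ^ ((3 : ℝ)/2) * plantV n (A n) / (k n : ℝ)) atTop (𝓝 0) ∧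
  Tendsto (fun n : ℕ => (m n : ℝ) / ((k n : ℝ) * Real.sqrt n)) atTop (𝓝 c)

/-- The Intermediate regime: `n^{3/2} V(A)/k → λ` and `m/(k n^{1/2}) → c`. -/
def IntermediateRegime (A : (n : ℕ) → Fin n → ℕ) (m k : ℕ → ℕ) (lam c : ℝ) : Prop :=
  Tendsto (fun n : ℕ => (n : ℝ) ^ ((3 : ℝ)/2) * plantV n (A n) / (k n : ℝ)) atTop (𝓝 lam) ∧
  Tendsto (fun n : ℕ => (m n : ℝ) / ((k n : ℝ) * Real.sqrt n)) atTop (𝓝 c)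

/-- The Hilly regime: `n^{3/2} V(A)/k → ∞` and `m/(V(A) n²) → c`. -/
def HillyRegime (A : (n : ℕ) → Fin n → ℕ) (m k : ℕ → ℕ) (c : ℝ) : Prop :=
  Tendsto (fun n : ℕ => (n : ℝ) ^ ((3 : ℝ)/2) * plantV n (A n) / (k n : ℝ)) atTop atTop ∧
  Tendsto (fun n : ℕ => (m n : ℝ) / (plantV n (A n) * (n : ℝ) ^ 2)) atTop (𝓝 c)

/-- One of the three regimes holds (with its positive constants). -/
def SomeRegime (A : (n : ℕ) → Fin n → ℕ) (m k : ℕ → ℕ) : Prop :=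
  (∃ c : ℝ, 0 < c ∧ FlatRegime A m k c) ∨
  (∃ lam c : ℝ, 0 < lam ∧ 0 < c ∧ IntermediateRegime A m k lam c) ∨
  (∃ c : ℝ, 0 < c ∧ HillyRegime A m k c)

/-- `μ_F = kn/m − k²n/(2m²)`. -/
noncomputable def muF (n m k : ℕ) : ℝ :=
  (k : ℝ) * n / m - (k : ℝ) ^ 2 * n / (2 * (m : ℝ) ^ 2)

/-! ### Expectations over independent throws -/

/-- Conditional expectation of `T` after one more ball is thrown into a uniform bin. -/
noncomputable def avgStep (n : ℕ) (T : (Fin n → ℕ) → ℝ) : (Fin n → ℕ) → ℝ :=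
  fun z => (n : ℝ)⁻¹ * ∑ i, T (z + Pi.single i 1)

/-- Expectation of `T` under `ST(m,n)`, defined by throwing the balls one at a time. -/
noncomputable def ballE (n : ℕ) : ℕ → ((Fin n → ℕ) → ℝ) → ℝ
  | 0, T => T 0
  | m + 1, T => ballE n m (avgStep n T)

/-- The one-ball averaging operator seen from a single bin, which receives the ball with
probability `1/n`. -/
noncomputable def lazyStep (n : ℕ) (g : ℕ → ℝ) : ℕ → ℝ :=
  fun x => (1 - (n : ℝ)⁻¹) * g x + (n : ℝ)⁻¹ * g (x + 1)

/-- Expectation of `g` under the binomial law of the content of one bin after `m` throws. -/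
noncomputable def margE (n : ℕ) : ℕ → (ℕ → ℝ) → ℝ
  | 0, g => g 0
  | m + 1, g => margE n m (lazyStep n g)

lemma ballE_mono (n m : ℕ) {T U : (Fin n → ℕ) → ℝ} (h : ∀ z, T z ≤ U z) :
    ballE n m T ≤ ballE n m U := by
  induction m generalizing T U with
  | zero => exact h 0
  | succ m ih =>
    refine ih fun z => ?_
    unfold avgStep
    gcongr
    exact h _

lemma ballE_add (n m : ℕ) (T U : (Fin n → ℕ) → ℝ) :
    ballE n m (fun z => T z + U z) = ballE n m T + ballE n m U := by
  induction m generalizing T U with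
  | zero => rfl
  | succ m ih =>
    simp only [ballE]
    rw [← ih]
    congr 1
    funext z
    simp only [avgStep, Finset.sum_add_distrib]
    ring

lemma ballE_mul (n m : ℕ) (c : ℝ) (T : (Fin n → ℕ) → ℝ) :
    ballE n m (fun z => c * T z) = c * ballE n m T := by
  induction m generalizing T with
  | zero => rfl
  | succ m ih =>
    simp only [ballE]
    rw [← ih]
    congr 1
    funext z
    simp only [avgStep, ← Finset.mul_sum]
    ring

lemma ballE_const (n m : ℕ) (hn : 0 < n) (c : ℝ) : ballE n m (fun _ => c) = c := by
  induction m with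
  | zero => rfl
  | succ m ih =>
    simp only [ballE]
    convert ih using 2
    funext z
    have : (n : ℝ) ≠ 0 := by positivity
    simp [avgStep]
    field_simp

lemma ballE_sub (n m : ℕ) (T U : (Fin n → ℕ) → ℝ) :
    ballE n m (fun z => T z - U z) = ballE n m T - ballE n m U := by
  have := ballE_add n m T (fun z => (-1) * U z)
  rw [ballE_mul] at this
  rw [show (fun z => T z - U z) = fun z => T z + (-1) * U z by funext z; ring, this]
  ring

lemma margE_add (n m : ℕ) (T U : ℕ → ℝ) :
    margE n m (fun z => T z + U z) = margE n m T + margE n m U := by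
  induction m generalizing T U with
  | zero => rfl
  | succ m ih =>
    simp only [margE]
    rw [← ih]
    congr 1
    funext z
    simp only [lazyStep]
    ring

lemma margE_mul (n m : ℕ) (c : ℝ) (T : ℕ → ℝ) :
    margE n m (fun z => c * T z) = c * margE n m T := by
  induction m generalizing T with
  | zero => rfl
  | succ m ih =>
    simp only [margE]
    rw [← ih]
    congr 1
    funext z
    simp only [lazyStep]
    ring

lemma margE_const (n m : ℕ) (c : ℝ) : margE n m (fun _ => c) = c := by
  induction m with
  | zero => rfl
  | succ m ih =>
    simp only [margE]
    convert ih using 2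
    funext z
    simp only [lazyStep]
    ring

lemma one_sub_inv_natCast_nonneg (n : ℕ) : (0 : ℝ) ≤ 1 - (n : ℝ)⁻¹ := by
  have := Nat.cast_inv_le_one (α := ℝ) n
  linarith

lemma margE_mono (n m : ℕ) {T U : ℕ → ℝ} (h : ∀ z, T z ≤ U z) :
    margE n m T ≤ margE n m U := by
  induction m generalizing T U with
  | zero => exact h 0
  | succ m ih =>
    refine ih fun z => ?_
    unfold lazyStep
    have := one_sub_inv_natCast_nonneg n
    gcongr
    · exact h _
    · exact h _

lemma add_single_sum (n : ℕ) (g : Fin n → ℕ → ℝ) (z : Fin n → ℕ) (i : Fin n) :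
    ∑ j, g j ((z + Pi.single i 1 : Fin n → ℕ) j) = ∑ j, g j (z j) + (g i (z i + 1) - g i (z i)) := by
  rw [← Finset.add_sum_erase _ _ (mem_univ i), ← Finset.add_sum_erase _ _ (mem_univ i)]
  have : ∑ x ∈ univ.erase i, g x ((z + Pi.single i 1 : Fin n → ℕ) x) = ∑ x ∈ univ.erase i, g x (z x) := by
    refine Finset.sum_congr rfl fun x hx => ?_
    simp [Pi.single_eq_of_ne (Finset.ne_of_mem_erase hx)]
  rw [this]
  simp
  ring

lemma avgStep_sum (n : ℕ) (hn : 0 < n) (g : Fin n → ℕ → ℝ) :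
    avgStep n (fun z => ∑ i, g i (z i)) = fun z => ∑ i, lazyStep n (g i) (z i) := by
  funext z
  have hn' : (n : ℝ) ≠ 0 := by positivity
  simp only [avgStep, add_single_sum, lazyStep, Finset.sum_add_distrib, Finset.sum_sub_distrib,
    ← Finset.mul_sum, Finset.sum_const, Finset.card_univ, Fintype.card_fin, nsmul_eq_mul]
  field_simp
  ring

lemma ballE_sum (n m : ℕ) (hn : 0 < n) (g : Fin n → ℕ → ℝ) :
    ballE n m (fun z => ∑ i, g i (z i)) = ∑ i, margE n m (g i) := by
  induction m generalizing g with
  | zero => rfl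
  | succ m ih =>
    simp only [ballE, margE]
    rw [avgStep_sum n hn, ih]

/-- Efron–Stein inequality for sums over bins: each of the `m + 1` balls contributes at most the
mean square of the increment it causes. -/
lemma efron_stein (n m : ℕ) (hn : 0 < n) (g : Fin n → ℕ → ℝ) :
    ballE n (m + 1) (fun z => (∑ i, g i (z i)) ^ 2)
        - ballE n (m + 1) (fun z => ∑ i, g i (z i)) ^ 2
      ≤ (m + 1) * ((n : ℝ)⁻¹ * ∑ i, margE n m (fun x => (g i (x + 1) - g i x) ^ 2)) := by
  have hn' : (0 : ℝ) < n := by positivity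
  -- One averaging step splits the second moment into that of the conditional mean and a conditional
  -- variance, which is at most the mean square increment.
  have step : ∀ (g : Fin n → ℕ → ℝ) (m : ℕ), ballE n (m + 1) (fun z => (∑ i, g i (z i)) ^ 2) ≤
      ballE n m (fun z => (∑ i, lazyStep n (g i) (z i)) ^ 2) +
        (n : ℝ)⁻¹ * ∑ i, margE n m (fun x => (g i (x + 1) - g i x) ^ 2) := by
    intro g m
    rw [← ballE_sum n m hn, ← ballE_mul, ← ballE_add]
    refine ballE_mono n m fun z => ?_
    have h2 := congrFun (avgStep_sum n hn g) z
    rw [← h2]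
    simp only [avgStep, add_single_sum]
    set S := ∑ j, g j (z j)
    simp only [add_sq, Finset.sum_add_distrib, Finset.sum_const, Finset.card_univ,
      Fintype.card_fin, nsmul_eq_mul, ← Finset.mul_sum]
    set X := ∑ i, (g i (z i + 1) - g i (z i))
    set Y := ∑ i, (g i (z i + 1) - g i (z i)) ^ 2
    have e : ((n : ℝ)⁻¹ * (n * S + X)) ^ 2 = S ^ 2 + 2 * S * ((n : ℝ)⁻¹ * X) + ((n : ℝ)⁻¹ * X) ^ 2 := by
      field_simp
      ring
    have e2 : (n : ℝ)⁻¹ * (n * S ^ 2 + 2 * S * X + Y) =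
        S ^ 2 + 2 * S * ((n : ℝ)⁻¹ * X) + (n : ℝ)⁻¹ * Y := by
      field_simp
    rw [e, e2]
    nlinarith [sq_nonneg ((n : ℝ)⁻¹ * X)]
  induction m generalizing g with
  | zero =>
    have := step g 0
    simp only [ballE, avgStep_sum n hn] at this ⊢
    simp only [Nat.cast_zero, zero_add, one_mul]
    linarith
  | succ m ih =>
    have h1 := step g (m + 1)
    have h2 := ih (fun i => lazyStep n (g i))
    have h3 : ballE n (m + 1 + 1) (fun z => ∑ i, g i (z i)) =
        ballE n (m + 1) (fun z => ∑ i, lazyStep n (g i) (z i)) := by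
      rw [ballE, avgStep_sum n hn]
    have h4 : ∑ i, margE n m (fun x => (lazyStep n (g i) (x + 1) - lazyStep n (g i) x) ^ 2) ≤
        ∑ i, margE n (m + 1) (fun x => (g i (x + 1) - g i x) ^ 2) := by
      refine Finset.sum_le_sum fun i _ => ?_
      rw [margE]
      refine margE_mono n m fun x => ?_
      simp only [lazyStep]
      have h5 := one_sub_inv_natCast_nonneg n
      have h6 : (0 : ℝ) ≤ (n : ℝ)⁻¹ := by positivity
      set p := (n : ℝ)⁻¹
      nlinarith [mul_nonneg (mul_nonneg h5 h6)
        (sq_nonneg ((g i (x + 1) - g i x) - (g i (x + 1 + 1) - g i (x + 1))))]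
    rw [h3]
    push_cast
    have h7 : ((m : ℝ) + 1) * ((n : ℝ)⁻¹ * ∑ i, margE n m
        (fun x => (lazyStep n (g i) (x + 1) - lazyStep n (g i) x) ^ 2)) ≤
        (m + 1) * ((n : ℝ)⁻¹ * ∑ i, margE n (m + 1) (fun x => (g i (x + 1) - g i x) ^ 2)) := by
      gcongr
    linarith

/-! ### Central moments of a bin -/

/-- `p`-th central moment of the binomial law with `t` trials and success probability `1/n`. -/
noncomputable def cmom (n t p : ℕ) : ℝ :=
  margE n t (fun x => ((x : ℝ) - t / n) ^ p)

lemma margE_poly (n t : ℕ) (c0 c1 c2 c3 c4 c5 c6 : ℝ) :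
    margE n t (fun x => c0 + c1 * ((x : ℝ) - t / n) ^ 1 + c2 * ((x : ℝ) - t / n) ^ 2
      + c3 * ((x : ℝ) - t / n) ^ 3 + c4 * ((x : ℝ) - t / n) ^ 4 + c5 * ((x : ℝ) - t / n) ^ 5
      + c6 * ((x : ℝ) - t / n) ^ 6) =
    c0 + c1 * cmom n t 1 + c2 * cmom n t 2 + c3 * cmom n t 3 + c4 * cmom n t 4 + c5 * cmom n t 5
      + c6 * cmom n t 6 := by
  simp only [margE_add, margE_mul, margE_const, cmom]

lemma cmom_one (n t : ℕ) : cmom n t 1 = 0 := by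
  induction t with
  | zero => simp [cmom, margE]
  | succ t ih =>
    rw [cmom, margE]
    have := margE_poly n t 0 1 0 0 0 0 0
    rw [ih] at this
    simp only [zero_mul, add_zero, zero_add, mul_zero, one_mul] at this
    rw [← this]
    congr 1
    funext x
    simp only [lazyStep]
    push_cast
    ring

lemma cmom_two (n t : ℕ) : cmom n t 2 = t * ((n : ℝ)⁻¹ * (1 - (n : ℝ)⁻¹)) := by
  induction t with
  | zero => simp [cmom, margE]
  | succ t ih =>
    rw [cmom, margE]
    set p := (n : ℝ)⁻¹ with hp
    have := margE_poly n t (p * (1 - p)) 0 1 0 0 0 0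
    rw [ih] at this
    simp only [zero_mul, add_zero, one_mul] at this
    push_cast
    rw [add_mul, one_mul, add_comm ((t : ℝ) * _), ← this]
    congr 1
    funext x
    simp only [lazyStep]
    push_cast
    rw [div_eq_mul_inv, div_eq_mul_inv, ← hp]
    ring

lemma cmom_three (n t : ℕ) :
    cmom n t 3 = t * ((n : ℝ)⁻¹ * (1 - (n : ℝ)⁻¹) * (1 - 2 * (n : ℝ)⁻¹)) := by
  induction t with
  | zero => simp [cmom, margE]
  | succ t ih =>
    rw [cmom, margE]
    set p := (n : ℝ)⁻¹ with hp
    have := margE_poly n t (p * (1 - p) * (1 - 2 * p)) (3 * (p * (1 - p))) 0 1 0 0 0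
    rw [ih, cmom_one] at this
    simp only [zero_mul, add_zero, one_mul, mul_zero] at this
    push_cast
    rw [add_mul, one_mul, add_comm ((t : ℝ) * _), ← this]
    congr 1
    funext x
    simp only [lazyStep]
    push_cast
    rw [div_eq_mul_inv, div_eq_mul_inv, ← hp]
    ring

lemma cmom_four (n t : ℕ) :
    cmom n t 4 = 3 * t * (t - 1) * ((n : ℝ)⁻¹ * (1 - (n : ℝ)⁻¹)) ^ 2 +
      t * ((1 - (n : ℝ)⁻¹) * (n : ℝ)⁻¹ ^ 4 + (n : ℝ)⁻¹ * (1 - (n : ℝ)⁻¹) ^ 4) := by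
  induction t with
  | zero => simp [cmom, margE]
  | succ t ih =>
    rw [cmom, margE]
    set p := (n : ℝ)⁻¹ with hp
    have := margE_poly n t ((1 - p) * p ^ 4 + p * (1 - p) ^ 4) (4 * (p * (1 - p) * (1 - 2 * p)))
      (6 * (p * (1 - p))) 0 1 0 0
    rw [ih, cmom_one, cmom_two, ← hp] at this
    simp only [zero_mul, add_zero, one_mul, mul_zero] at this
    push_cast
    trans ((1 - p) * p ^ 4 + p * (1 - p) ^ 4 + 6 * (p * (1 - p)) * (↑t * (p * (1 - p))) +
      (3 * ↑t * (↑t - 1) * (p * (1 - p)) ^ 2 + ↑t * ((1 - p) * p ^ 4 + p * (1 - p) ^ 4)))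
    · rw [← this]
      congr 1
      funext x
      simp only [lazyStep]
      push_cast
      rw [div_eq_mul_inv, div_eq_mul_inv, ← hp]
      ring
    · ring

lemma cmom_six_succ (n t : ℕ) :
    cmom n (t + 1) 6 = cmom n t 6 + 15 * ((n : ℝ)⁻¹ * (1 - (n : ℝ)⁻¹)) * cmom n t 4
      + 20 * ((n : ℝ)⁻¹ * (1 - (n : ℝ)⁻¹) * (1 - 2 * (n : ℝ)⁻¹)) * cmom n t 3
      + 15 * ((1 - (n : ℝ)⁻¹) * (n : ℝ)⁻¹ ^ 4 + (n : ℝ)⁻¹ * (1 - (n : ℝ)⁻¹) ^ 4) * cmom n t 2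
      + ((1 - (n : ℝ)⁻¹) * (n : ℝ)⁻¹ ^ 6 + (n : ℝ)⁻¹ * (1 - (n : ℝ)⁻¹) ^ 6) := by
  rw [cmom, margE]
  set p := (n : ℝ)⁻¹ with hp
  have := margE_poly n t ((1 - p) * p ^ 6 + p * (1 - p) ^ 6)
    (6 * (- (1 - p) * p ^ 5 + p * (1 - p) ^ 5))
    (15 * ((1 - p) * p ^ 4 + p * (1 - p) ^ 4)) (20 * (p * (1 - p) * (1 - 2 * p)))
    (15 * (p * (1 - p))) 0 1
  rw [cmom_one] at this
  trans ((1 - p) * p ^ 6 + p * (1 - p) ^ 6 + 6 * (-(1 - p) * p ^ 5 + p * (1 - p) ^ 5) * 0 +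
              15 * ((1 - p) * p ^ 4 + p * (1 - p) ^ 4) * cmom n t 2 +
            20 * (p * (1 - p) * (1 - 2 * p)) * cmom n t 3 +
          15 * (p * (1 - p)) * cmom n t 4 +
        0 * cmom n t 5 +
      1 * cmom n t 6)
  · rw [← this]
    congr 1
    funext x
    simp only [lazyStep]
    push_cast
    rw [div_eq_mul_inv, div_eq_mul_inv, ← hp]
    ring
  · ring

/-- Bounds for the absolute central moments of a Bernoulli variable of parameter `1/n`. -/
lemma inv_pow_aux (n : ℕ) (j : ℕ) (hj : 2 ≤ j) :
    0 ≤ (1 - (n : ℝ)⁻¹) * (n : ℝ)⁻¹ ^ j + (n : ℝ)⁻¹ * (1 - (n : ℝ)⁻¹) ^ j ∧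
    (1 - (n : ℝ)⁻¹) * (n : ℝ)⁻¹ ^ j + (n : ℝ)⁻¹ * (1 - (n : ℝ)⁻¹) ^ j ≤ (n : ℝ)⁻¹ := by
  have h5 := one_sub_inv_natCast_nonneg n
  have h6 : (0 : ℝ) ≤ (n : ℝ)⁻¹ := by positivity
  set p := (n : ℝ)⁻¹
  refine ⟨by positivity, ?_⟩
  have h1 : p ^ j ≤ p := pow_le_of_le_one h6 (by linarith) (by omega)
  have h2 : (1 - p) ^ j ≤ 1 - p := pow_le_of_le_one h5 (by linarith) (by omega)
  have h3 : (1 - p) * p ^ j ≤ (1 - p) * p := by gcongr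
  have h4 : p * (1 - p) ^ j ≤ p * (1 - p) := by gcongr
  have h7 : p ^ j ≤ p ^ 2 := pow_le_pow_of_le_one h6 (by linarith) hj
  have h8 : (1 - p) * p ^ j ≤ (1 - p) * p ^ 2 := by gcongr
  nlinarith [mul_nonneg h5 h6]

lemma cmom_two_le (n t : ℕ) : cmom n t 2 ≤ (t : ℝ) / n := by
  rw [cmom_two]
  have h5 := one_sub_inv_natCast_nonneg n
  have h6 : (0 : ℝ) ≤ (n : ℝ)⁻¹ := by positivity
  rw [div_eq_mul_inv]
  gcongr
  nlinarith

lemma cmom_two_nonneg (n t : ℕ) : 0 ≤ cmom n t 2 := by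
  rw [cmom_two]
  have h5 := one_sub_inv_natCast_nonneg n
  positivity

lemma cmom_four_le (n t : ℕ) : cmom n t 4 ≤ 3 * ((t : ℝ) / n) ^ 2 + t / n := by
  rw [cmom_four]
  have h5 := one_sub_inv_natCast_nonneg n
  have h6 : (0 : ℝ) ≤ (n : ℝ)⁻¹ := by positivity
  have h7 := inv_pow_aux n 4 (by norm_num)
  rw [div_eq_mul_inv]
  set p := (n : ℝ)⁻¹
  have ht : (0 : ℝ) ≤ t := by positivity
  have h8 : t * ((1 - p) * p ^ 4 + p * (1 - p) ^ 4) ≤ t * p := by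
    gcongr
    exact h7.2
  have h9 : (p * (1 - p)) ^ 2 ≤ p ^ 2 := by
    gcongr
    nlinarith
  have h10 : (3 : ℝ) * t * (t - 1) * (p * (1 - p)) ^ 2 ≤ 3 * t * t * (p * (1 - p)) ^ 2 := by
    gcongr
    linarith
  have h11 : (3 : ℝ) * t * t * (p * (1 - p)) ^ 2 ≤ 3 * t * t * p ^ 2 := by
    gcongr
  nlinarith

lemma cmom_four_nonneg (n t : ℕ) : 0 ≤ cmom n t 4 := by
  rw [← margE_const n t 0]
  exact margE_mono n t fun x => by positivity

lemma cmom_six_le (n t : ℕ) (X : ℝ) (hX : (t : ℝ) / n ≤ X) :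
    cmom n t 6 ≤ (t : ℝ) / n * (45 * X ^ 2 + 50 * X + 1) := by
  induction t with
  | zero => simp [cmom, margE]
  | succ t ih =>
    have h5 := one_sub_inv_natCast_nonneg n
    have h6 : (0 : ℝ) ≤ (n : ℝ)⁻¹ := by positivity
    have h7 := inv_pow_aux n 4 (by norm_num)
    have h8 := inv_pow_aux n 6 (by norm_num)
    have hx0 : (0 : ℝ) ≤ t / n := by positivity
    have hle : (t : ℝ) / n ≤ X := by
      refine le_trans ?_ hX
      gcongr
      linarith
    have h9 := ih hle
    have hc4 : cmom n t 4 ≤ 3 * X ^ 2 + X := by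
      refine (cmom_four_le n t).trans ?_
      gcongr
    have hc2 : cmom n t 2 ≤ X := (cmom_two_le n t).trans hle
    have hc3 : (1 - 2 * (n : ℝ)⁻¹) * cmom n t 3 ≤ X := by
      rw [cmom_three]
      have : (1 - 2 * (n : ℝ)⁻¹) * (t * ((n : ℝ)⁻¹ * (1 - (n : ℝ)⁻¹) * (1 - 2 * (n : ℝ)⁻¹)))
        = cmom n t 2 * (1 - 2 * (n : ℝ)⁻¹) ^ 2 := by rw [cmom_two]; ring
      rw [this]
      have h10 : (1 - 2 * (n : ℝ)⁻¹) ^ 2 ≤ 1 := by nlinarith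
      calc _ ≤ cmom n t 2 * 1 := by
            have := cmom_two_nonneg n t
            gcongr
        _ ≤ X := by linarith
    rw [cmom_six_succ]
    have hX0 : 0 ≤ X := hx0.trans hle
    have n4 := cmom_four_nonneg n t
    have n2 := cmom_two_nonneg n t
    have hp : ((t + 1 : ℕ) : ℝ) / n = t / n + (n : ℝ)⁻¹ := by push_cast; rw [add_div, one_div]
    rw [hp]
    set p := (n : ℝ)⁻¹
    have a1 : 15 * (p * (1 - p)) * cmom n t 4 ≤ 15 * p * (3 * X ^ 2 + X) := by
      have : p * (1 - p) ≤ p := by nlinarith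
      gcongr
    have a2 : 20 * (p * (1 - p) * (1 - 2 * p)) * cmom n t 3 ≤ 20 * p * X := by
      have e : 20 * (p * (1 - p) * (1 - 2 * p)) * cmom n t 3 =
        20 * p * ((1 - p) * ((1 - 2 * p) * cmom n t 3)) := by ring
      rw [e]
      gcongr
      calc (1 - p) * ((1 - 2 * p) * cmom n t 3) ≤ (1 - p) * X := by gcongr
        _ ≤ X := by nlinarith
    have a3 : 15 * ((1 - p) * p ^ 4 + p * (1 - p) ^ 4) * cmom n t 2 ≤ 15 * p * X := by
      have := h7.2
      have := h7.1
      gcongr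
    have := h8.2
    nlinarith

/-! ### Convergence in probability as a filter -/

/-- Configurations for all numbers of bins at once; the first component is the number of bins. -/
abbrev Cfg : Type := Σ n : ℕ, (Fin n → ℕ)

/-- Probability under `ST(m(n), n)` of the `n`-bin part of the event `S`. -/
noncomputable def evProb (m : ℕ → ℕ) (S : Set Cfg) (n : ℕ) : ℝ :=
  ballE n (m n) (fun z => S.indicator (fun _ => (1 : ℝ)) ⟨n, z⟩)

lemma evProb_le_one (m : ℕ → ℕ) (S : Set Cfg) {n : ℕ} (hn : 0 < n) : evProb m S n ≤ 1 := by
  refine le_of_le_of_eq (ballE_mono _ _ (U := fun _ => 1) fun z => ?_) (ballE_const n (m n) hn 1)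
  exact Set.indicator_le_self' (fun _ _ => zero_le_one) _

lemma tendsto_evProb_of_le (m : ℕ → ℕ) (S : Set Cfg) (f : ℕ → ℝ)
    (hf : Tendsto f atTop (𝓝 1)) (h : ∀ᶠ n in atTop, f n ≤ evProb m S n) :
    Tendsto (evProb m S) atTop (𝓝 1) := by
  refine tendsto_of_tendsto_of_tendsto_of_le_of_le' hf tendsto_const_nhds h ?_
  filter_upwards [eventually_gt_atTop 0] with n hn
  exact evProb_le_one m S hn

/-- The filter of events whose probability under `ST(m(n), n)` tends to `1`. Thus
`∀ᶠ x in ballFilter m, P x` says that `P` holds with high probability, and `Tendsto T (ballFilter m)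
(𝓝 0)` says that `T` tends to `0` in probability. -/
noncomputable def ballFilter (m : ℕ → ℕ) : Filter Cfg where
  sets := {S | Tendsto (evProb m S) atTop (𝓝 1)}
  univ_sets := by
    refine tendsto_evProb_of_le m _ (fun _ => 1) tendsto_const_nhds ?_
    filter_upwards [eventually_gt_atTop 0] with n hn
    simp [evProb, ballE_const n (m n) hn]
  sets_of_superset := by
    intro S T hS hST
    refine tendsto_evProb_of_le m _ _ hS (Eventually.of_forall fun n => ?_)
    exact ballE_mono _ _ fun z => Set.indicator_le_indicator_of_subset hST (fun _ => zero_le_one) _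
  inter_sets := by
    intro S T hS hT
    have h : Tendsto (fun n => evProb m S n + evProb m T n - 1) atTop (𝓝 1) := by
      have := (hS.add hT).sub_const 1
      norm_num at this
      exact this
    refine tendsto_evProb_of_le m _ _ h ?_
    filter_upwards [eventually_gt_atTop 0] with n hn
    rw [evProb, evProb, ← ballE_add]
    nth_rw 3 [← ballE_const n (m n) hn 1]
    rw [← ballE_sub]
    refine ballE_mono _ _ fun z => ?_
    by_cases h1 : (⟨n, z⟩ : Cfg) ∈ S <;> by_cases h2 : (⟨n, z⟩ : Cfg) ∈ T <;> simp [h1, h2]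

lemma mem_ballFilter {m : ℕ → ℕ} {S : Set Cfg} :
    S ∈ ballFilter m ↔ Tendsto (evProb m S) atTop (𝓝 1) := Iff.rfl

lemma tendsto_fst_ballFilter (m : ℕ → ℕ) : Tendsto Sigma.fst (ballFilter m) atTop := by
  intro S hS
  rw [Filter.mem_map, mem_ballFilter]
  refine tendsto_evProb_of_le m _ (fun _ => 1) tendsto_const_nhds ?_
  filter_upwards [eventually_gt_atTop 0, hS] with n hn hnS
  refine le_of_eq_of_le (ballE_const n (m n) hn 1).symm (ballE_mono _ _ fun z => ?_)
  rw [Set.indicator_of_mem]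
  exact hnS

/-- The Markov inequality: convergence of the mean of a nonnegative statistic to `0` forces
convergence in probability. -/
lemma tendsto_ballFilter_of_mean (m : ℕ → ℕ) (T : Cfg → ℝ) (hT : ∀ x, 0 ≤ T x)
    (h : Tendsto (fun n => ballE n (m n) (fun z => T ⟨n, z⟩)) atTop (𝓝 0)) :
    Tendsto T (ballFilter m) (𝓝 0) := by
  rw [Metric.tendsto_nhds]
  intro ε hε
  change _ ∈ ballFilter m
  rw [mem_ballFilter]
  have h2 : Tendsto (fun n => 1 - ε⁻¹ * ballE n (m n) (fun z => T ⟨n, z⟩)) atTop (𝓝 1) := by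
    have := (h.const_mul ε⁻¹).const_sub 1
    simpa using this
  refine tendsto_evProb_of_le m _ _ h2 ?_
  filter_upwards [eventually_gt_atTop 0] with n hn
  rw [evProb, ← ballE_mul]
  nth_rw 1 [← ballE_const n (m n) hn 1]
  rw [← ballE_sub]
  refine ballE_mono _ _ fun z => ?_
  by_cases hz : T ⟨n, z⟩ < ε
  · rw [Set.indicator_of_mem]
    · have := hT ⟨n, z⟩
      have : 0 ≤ ε⁻¹ * T ⟨n, z⟩ := by positivity
      linarith
    · simpa [abs_of_nonneg (hT _)] using hz
  · rw [Set.indicator_of_notMem]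
    · have : 1 ≤ ε⁻¹ * T ⟨n, z⟩ := by
        rw [inv_mul_eq_div, one_le_div hε]
        linarith
      linarith
    · simpa [abs_of_nonneg (hT _)] using hz

lemma tendsto_zero_of_sq {ι : Type*} {l : Filter ι} {T : ι → ℝ}
    (h : Tendsto (fun x => T x ^ 2) l (𝓝 0)) : Tendsto T l (𝓝 0) := by
  have := (Real.continuous_sqrt.tendsto 0).comp h
  simp only [Real.sqrt_zero, Function.comp_def, Real.sqrt_sq_eq_abs] at this
  exact (tendsto_zero_iff_abs_tendsto_zero T).2 this

/-- The Chebyshev inequality with the Efron–Stein bound: the statistic `∑ g n i (z i)` is `c n` up to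
`o(N n)` in probability when its mean is and its Efron–Stein variance bound `B n` is `o((N n)²)`. -/
lemma tendsto_ballFilter_of_var (m : ℕ → ℕ) (hm : ∀ᶠ n in atTop, 0 < m n)
    (g : (n : ℕ) → Fin n → ℕ → ℝ) (c N B : ℕ → ℝ)
    (hB : ∀ᶠ n in atTop, (m n : ℝ) / n *
      ∑ i, margE n (m n - 1) (fun x => (g n i (x + 1) - g n i x) ^ 2) ≤ B n)
    (hBN : Tendsto (fun n => B n / N n ^ 2) atTop (𝓝 0))
    (hc : Tendsto (fun n => (∑ i, margE n (m n) (g n i) - c n) / N n) atTop (𝓝 0)) :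
    Tendsto (fun x : Cfg => (∑ i, g x.1 i (x.2 i) - c x.1) / N x.1) (ballFilter m) (𝓝 0) := by
  apply tendsto_zero_of_sq
  refine tendsto_ballFilter_of_mean m _ (fun x => sq_nonneg _) ?_
  have h1 : Tendsto (fun n => B n / N n ^ 2 +
      ((∑ i, margE n (m n) (g n i) - c n) / N n) ^ 2) atTop (𝓝 0) := by
    have := hBN.add (hc.pow 2)
    simpa using this
  refine tendsto_of_tendsto_of_tendsto_of_le_of_le' tendsto_const_nhds h1 ?_ ?_
  · filter_upwards [eventually_gt_atTop 0] with n hn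
    rw [← ballE_const n (m n) hn 0]
    exact ballE_mono _ _ fun z => sq_nonneg _
  · filter_upwards [eventually_gt_atTop 0, hm, hB] with n hn hmn hBn
    obtain ⟨t, ht⟩ : ∃ t, m n = t + 1 := ⟨m n - 1, by omega⟩
    have hes := efron_stein n t hn (g n)
    have e1 : ballE n (m n) (fun z => ((∑ i, g n i (z i) - c n) / N n) ^ 2) =
        (1 / N n ^ 2) * (ballE n (m n) (fun z => (∑ i, g n i (z i)) ^ 2)
          + ((-2 * c n) * ballE n (m n) (fun z => ∑ i, g n i (z i)) + c n ^ 2)) := by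
      rw [← ballE_mul, ← ballE_const n (m n) hn (c n ^ 2), ← ballE_add, ← ballE_add, ← ballE_mul]
      congr 1
      funext z
      rw [div_pow]
      ring
    have e2 : (m n : ℝ) / n *
        ∑ i, margE n (m n - 1) (fun x => (g n i (x + 1) - g n i x) ^ 2) =
        (t + 1) * ((n : ℝ)⁻¹ * ∑ i, margE n t (fun x => (g n i (x + 1) - g n i x) ^ 2)) := by
      rw [ht]
      simp only [Nat.add_sub_cancel]
      push_cast
      ring
    rw [e2] at hBn
    change ballE n (m n) (fun z => ((∑ i, g n i (z i) - c n) / N n) ^ 2) ≤ _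
    rw [← ht, ballE_sum n (m n) hn] at hes
    rw [e1, ballE_sum n (m n) hn, div_pow, ← add_div, div_eq_mul_one_div (_ + _),
      mul_comm]
    refine mul_le_mul_of_nonneg_right ?_ (by positivity)
    nlinarith

/-! ### Multinomial weights and the recursive expectation -/

/-- The last ball fell into some bin; conditioning on it gives this recursion. -/
lemma stProb_succ (n m : ℕ) (hn : 0 < n) (z : Fin n → ℕ) :
    stProb n (m + 1) z =
      (n : ℝ)⁻¹ * ∑ i, if 0 < z i then stProb n m (z - Pi.single i 1) else 0 := by
  have hsum : ∀ i, 0 < z i → ∑ j, z j = ∑ j, (z - Pi.single i 1 : Fin n → ℕ) j + 1 := by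
    intro i hi
    have h2 : ∑ j, z j = ∑ j, ((z - Pi.single i 1 : Fin n → ℕ) j + (Pi.single i 1 : Fin n → ℕ) j) := by
      refine Finset.sum_congr rfl fun j _ => ?_
      by_cases hj : j = i
      · subst hj
        simp
        omega
      · simp [hj]
    rw [h2, Finset.sum_add_distrib]
    simp
  by_cases hz : ∑ j, z j = m + 1
  · have hterm : ∀ i, (if 0 < z i then stProb n m (z - Pi.single i 1) else 0) =
        (z i : ℝ) * (((m.factorial : ℝ) / ∏ i, ((z i).factorial : ℝ)) * (n : ℝ)⁻¹ ^ m) := by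
      intro i
      by_cases hi : 0 < z i
      · rw [if_pos hi, stProb, if_pos (by have := hsum i hi; omega)]
        have hprod : ∏ j, ((z j).factorial : ℝ) =
            z i * ∏ j, (((z - Pi.single i 1 : Fin n → ℕ) j).factorial : ℝ) := by
          have e1 := Finset.mul_prod_erase univ (fun j => ((z j).factorial : ℝ)) (mem_univ i)
          have e2 := Finset.mul_prod_erase univ
            (fun j => (((z - Pi.single i 1 : Fin n → ℕ) j).factorial : ℝ)) (mem_univ i)
          rw [← e1, ← e2, ← mul_assoc]
          congr 1
          · simp only [Pi.sub_apply, Pi.single_eq_same]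
            rw [← Nat.mul_factorial_pred (by omega : z i ≠ 0)]
            push_cast
            rfl
          · refine Finset.prod_congr rfl fun j hj => ?_
            simp [Pi.single_eq_of_ne (Finset.ne_of_mem_erase hj)]
        rw [hprod]
        have hi' : (z i : ℝ) ≠ 0 := by positivity
        have hp : ∏ j, (((z - Pi.single i 1 : Fin n → ℕ) j).factorial : ℝ) ≠ 0 :=
          Finset.prod_ne_zero_iff.2 fun j _ => by positivity
        field_simp
      · have : z i = 0 := by omega
        simp [this]
    simp only [hterm]
    rw [← Finset.sum_mul, ← Nat.cast_sum, hz, stProb, if_pos hz, Nat.factorial_succ]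
    push_cast
    ring
  · rw [stProb, if_neg hz, Finset.sum_eq_zero, mul_zero]
    intro i _
    split_ifs with hi
    · rw [stProb, if_neg]
      have := hsum i hi
      omega
    · rfl

lemma finite_support_stProb (n m : ℕ) (T : (Fin n → ℕ) → ℝ) :
    (Function.support fun z => stProb n m z * T z).Finite := by
  refine (Finset.finite_toSet (Finset.piAntidiag univ m)).subset fun z hz => ?_
  simp only [Finset.mem_coe, Finset.mem_piAntidiag]
  refine ⟨?_, fun i _ => mem_univ i⟩
  by_contra h
  simp [stProb, h] at hz

/-- The recursive expectation `ballE` is the expectation under the multinomial weights `stProb`. -/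
lemma tsum_stProb_mul (n m : ℕ) (hn : 0 < n) (T : (Fin n → ℕ) → ℝ) :
    ∑' z, stProb n m z * T z = ballE n m T := by
  induction m generalizing T with
  | zero =>
    rw [tsum_eq_single 0]
    · simp [stProb, ballE]
    · intro z hz
      have : ∑ i, z i ≠ 0 := by
        intro h
        apply hz
        funext i
        simpa using (Finset.sum_eq_zero_iff.1 h) i (mem_univ i)
      simp [stProb, this]
  | succ m ih =>
    rw [ballE, ← ih]
    have hshift : ∀ i : Fin n, HasSum
        (fun z => (if 0 < z i then stProb n m (z - Pi.single i 1) else 0) * T z)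
        (∑' z, stProb n m z * T (z + Pi.single i 1)) := by
      intro i
      have hinj : Function.Injective (fun z : Fin n → ℕ => z + Pi.single i 1) :=
        fun a b h => add_right_cancel h
      rw [← hinj.hasSum_iff]
      · have hs : Summable (fun z => stProb n m z * T (z + Pi.single i 1)) :=
          summable_of_hasFiniteSupport
            (finite_support_stProb n m fun z => T (z + Pi.single i 1))
        convert hs.hasSum using 1
        funext z
        simp
      · intro z hz
        rw [if_neg, zero_mul]
        intro hi
        apply hz
        refine ⟨z - Pi.single i 1, ?_⟩
        funext j
        by_cases hj : j = i
        · subst hj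
          simp
          omega
        · simp [hj]
    have h1 := (hasSum_sum (s := univ) fun i _ => hshift i).mul_left (n : ℝ)⁻¹
    have h2 : ∀ z, stProb n (m + 1) z * T z = (n : ℝ)⁻¹ *
        ∑ i, (if 0 < z i then stProb n m (z - Pi.single i 1) else 0) * T z := by
      intro z
      rw [stProb_succ n m hn, ← Finset.sum_mul, mul_assoc]
    simp only [h2]
    rw [h1.tsum_eq]
    have hs : ∀ i : Fin n, Summable (fun z => stProb n m z * T (z + Pi.single i 1)) := fun i =>
      summable_of_hasFiniteSupport (finite_support_stProb n m fun z => T (z + Pi.single i 1))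
    have h3 := (hasSum_sum (s := univ) fun (i : Fin n) _ => (hs i).hasSum).mul_left (n : ℝ)⁻¹
    rw [← h3.tsum_eq]
    congr 1
    funext z
    rw [avgStep, ← Finset.mul_sum]
    ring

lemma probOf_stProb (n m : ℕ) (hn : 0 < n) (s : Set (Fin n → ℕ)) :
    probOf (stProb n m) s = ballE n m (s.indicator fun _ => 1) := by
  rw [← tsum_stProb_mul n m hn, probOf]
  congr 1
  funext z
  by_cases hz : z ∈ s <;> simp [hz]

lemma plProb_add (n m : ℕ) (a y : Fin n → ℕ) (hk : ∑ i, a i ≤ m) :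
    plProb n m a (a + y) = stProb n (m - ∑ i, a i) y := by
  have h1 : (∑ i, (a + y) i = m ∧ ∀ i, a i ≤ (a + y) i) ↔ ∑ i, y i = m - ∑ i, a i := by
    simp only [Pi.add_apply, Finset.sum_add_distrib, Nat.le_add_right, implies_true, and_true]
    omega
  simp only [plProb, stProb, h1]
  simp

lemma probOf_plProb (n m : ℕ) (hn : 0 < n) (a : Fin n → ℕ) (hk : ∑ i, a i ≤ m)
    (s : Set (Fin n → ℕ)) :
    probOf (plProb n m a) s =
      ballE n (m - ∑ i, a i) ({y | a + y ∈ s}.indicator fun _ => 1) := by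
  rw [← probOf_stProb n _ hn, probOf, probOf]
  have hinj : Function.Injective (fun y : Fin n → ℕ => a + y) :=
    fun b c h => add_left_cancel h
  rw [← hinj.tsum_eq]
  · congr 1
    funext y
    by_cases hy : a + y ∈ s
    · simp [hy, plProb_add n m a y hk]
    · simp [hy]
  · intro z hz
    have : ∀ i, a i ≤ z i := by
      by_contra h
      apply hz
      by_cases hzs : z ∈ s
      · rw [Set.indicator_of_mem hzs, plProb, if_neg]
        exact fun h' => h h'.2
      · simp [hzs]
    refine ⟨z - a, ?_⟩
    funext i
    have := this i
    simp
    omega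

lemma eventually_sum_eq (m : ℕ → ℕ) : ∀ᶠ x in ballFilter m, ∑ i, x.2 i = m x.1 := by
  change _ ∈ ballFilter m
  rw [mem_ballFilter]
  refine tendsto_evProb_of_le m _ (fun _ => 1) tendsto_const_nhds ?_
  filter_upwards [eventually_gt_atTop 0] with n hn
  refine le_of_eq_of_le (ballE_const n (m n) hn 1).symm (le_of_eq ?_)
  rw [evProb, ← tsum_stProb_mul n _ hn, ← tsum_stProb_mul n _ hn]
  congr 1
  funext z
  by_cases hz : ∑ i, z i = m n <;> simp [hz, stProb]

/-! ### Concentration of the power sums -/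

lemma margE_diff_two (n t : ℕ) (d : ℝ) (hd : d = ((t + 1 : ℕ) : ℝ) / n) (hd1 : 1 ≤ d) :
    margE n t (fun x => ((((x + 1 : ℕ) : ℝ) - d) ^ 2 - ((x : ℝ) - d) ^ 2) ^ 2) ≤ 10 * d := by
  have h5 := one_sub_inv_natCast_nonneg n
  have h6 : (0 : ℝ) ≤ (n : ℝ)⁻¹ := by positivity
  have hdt : d = t / n + (n : ℝ)⁻¹ := by rw [hd]; push_cast; ring
  set p := (n : ℝ)⁻¹
  have h2 := cmom_two_le n t
  have hp := margE_poly n t 2 0 8 0 0 0 0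
  have : margE n t (fun x => ((((x + 1 : ℕ) : ℝ) - d) ^ 2 - ((x : ℝ) - d) ^ 2) ^ 2) ≤
      2 + 8 * cmom n t 2 := by
    simp only [zero_mul, add_zero] at hp
    rw [← hp]
    refine margE_mono n t fun x => ?_
    push_cast
    rw [hdt]
    generalize (x : ℝ) = y
    generalize (t : ℝ) / n = q
    obtain ⟨v, rfl⟩ : ∃ v, y = v + q := ⟨y - q, by ring⟩
    have : ((v + q + 1 - (q + p)) ^ 2 - (v + q - (q + p)) ^ 2) ^ 2 = (2 * v + (1 - 2 * p)) ^ 2 := by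
      ring
    rw [this]
    nlinarith [sq_nonneg (2 * v - (1 - 2 * p)), mul_nonneg h5 h6]
  linarith

lemma margE_diff_three (n t : ℕ) (d : ℝ) (hd : d = ((t + 1 : ℕ) : ℝ) / n) (hd1 : 1 ≤ d) :
    margE n t (fun x => ((((x + 1 : ℕ) : ℝ) - d) ^ 3 - ((x : ℝ) - d) ^ 3) ^ 2) ≤ 138 * d ^ 2 := by
  have h5 := one_sub_inv_natCast_nonneg n
  have h6 : (0 : ℝ) ≤ (n : ℝ)⁻¹ := by positivity
  have hdt : d = t / n + (n : ℝ)⁻¹ := by rw [hd]; push_cast; ring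
  set p := (n : ℝ)⁻¹
  have h2 := cmom_two_le n t
  have h4 := cmom_four_le n t
  have hp := margE_poly n t 3 0 27 0 27 0 0
  have : margE n t (fun x => ((((x + 1 : ℕ) : ℝ) - d) ^ 3 - ((x : ℝ) - d) ^ 3) ^ 2) ≤
      3 + 27 * cmom n t 2 + 27 * cmom n t 4 := by
    simp only [zero_mul, add_zero] at hp
    rw [← hp]
    refine margE_mono n t fun x => ?_
    push_cast
    rw [hdt]
    generalize (x : ℝ) = y
    generalize (t : ℝ) / n = q
    obtain ⟨v, rfl⟩ : ∃ v, y = v + q := ⟨y - q, by ring⟩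
    have : ((v + q + 1 - (q + p)) ^ 3 - (v + q - (q + p)) ^ 3) ^ 2 =
        (3 * v ^ 2 + (3 - 6 * p) * v + (3 * p ^ 2 - 3 * p + 1)) ^ 2 := by
      ring
    rw [this]
    have e1 : ∀ a b c : ℝ, (a + b + c) ^ 2 ≤ 3 * (a ^ 2 + b ^ 2 + c ^ 2) := fun a b c => by
      nlinarith [sq_nonneg (a - b), sq_nonneg (a - c), sq_nonneg (b - c)]
    refine (e1 _ _ _).trans ?_
    have c1 : (3 - 6 * p) ^ 2 ≤ 9 := by nlinarith
    have c2 : (3 * p ^ 2 - 3 * p + 1) ^ 2 ≤ 1 := by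
      have : 0 ≤ 3 * p ^ 2 - 3 * p + 1 := by nlinarith [sq_nonneg (p - 1 / 2)]
      have : 3 * p ^ 2 - 3 * p + 1 ≤ 1 := by nlinarith
      nlinarith
    have c3 : ((3 - 6 * p) * v) ^ 2 ≤ 9 * v ^ 2 := by
      rw [mul_pow]
      gcongr
    have : v + q - q = v := by ring
    rw [this]
    nlinarith
  have hq0 : (0 : ℝ) ≤ t / n := by positivity
  have hqd : (t : ℝ) / n ≤ d := by linarith
  nlinarith

lemma cmom_six_le_cube (n t : ℕ) (d : ℝ) (hqd : (t : ℝ) / n ≤ d) (hd1 : 1 ≤ d) :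
    cmom n t 6 ≤ 96 * d ^ 3 := by
  refine (cmom_six_le n t d hqd).trans ?_
  have : (t : ℝ) / n * (45 * d ^ 2 + 50 * d + 1) ≤ d * (96 * d ^ 2) := by
    gcongr
    nlinarith
  linarith

lemma cmom_four_le_cube (n t : ℕ) (d : ℝ) (hqd : (t : ℝ) / n ≤ d) (hd1 : 1 ≤ d) :
    cmom n t 4 ≤ 4 * d ^ 3 := by
  have hq0 : (0 : ℝ) ≤ t / n := by positivity
  have h4 := cmom_four_le n t
  have : (t / n : ℝ) ^ 2 ≤ d ^ 2 := by gcongr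
  have : d ^ 2 ≤ d ^ 3 := pow_le_pow_right₀ hd1 (by norm_num)
  have : d ≤ d ^ 2 := le_self_pow₀ hd1 (by norm_num)
  linarith

lemma margE_diff_four (n t : ℕ) (d : ℝ) (hd : d = ((t + 1 : ℕ) : ℝ) / n) (hd1 : 1 ≤ d) :
    margE n t (fun x => ((((x + 1 : ℕ) : ℝ) - d) ^ 4 - ((x : ℝ) - d) ^ 4) ^ 2) ≤
      7000 * d ^ 3 := by
  have h5 := one_sub_inv_natCast_nonneg n
  have h6 : (0 : ℝ) ≤ (n : ℝ)⁻¹ := by positivity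
  have hdt : d = t / n + (n : ℝ)⁻¹ := by rw [hd]; push_cast; ring
  set p := (n : ℝ)⁻¹
  have hq0 : (0 : ℝ) ≤ t / n := by positivity
  have hqd : (t : ℝ) / n ≤ d := by linarith
  have h2 := cmom_two_le n t
  have hp := margE_poly n t 4 0 64 0 144 0 64
  have : margE n t (fun x => ((((x + 1 : ℕ) : ℝ) - d) ^ 4 - ((x : ℝ) - d) ^ 4) ^ 2) ≤
      4 + 64 * cmom n t 2 + 144 * cmom n t 4 + 64 * cmom n t 6 := by
    simp only [zero_mul, add_zero] at hp
    rw [← hp]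
    refine margE_mono n t fun x => ?_
    push_cast
    rw [hdt]
    generalize (x : ℝ) = y
    generalize (t : ℝ) / n = q
    obtain ⟨v, rfl⟩ : ∃ v, y = v + q := ⟨y - q, by ring⟩
    have : ((v + q + 1 - (q + p)) ^ 4 - (v + q - (q + p)) ^ 4) ^ 2 =
        (4 * v ^ 3 + (6 - 12 * p) * v ^ 2 + (4 - 12 * p + 12 * p ^ 2) * v
          + ((1 - p) ^ 4 - p ^ 4)) ^ 2 := by
      ring
    rw [this]
    have e1 : ∀ a b c e : ℝ, (a + b + c + e) ^ 2 ≤ 4 * (a ^ 2 + b ^ 2 + c ^ 2 + e ^ 2) :=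
      fun a b c e => by
        nlinarith [sq_nonneg (a - b), sq_nonneg (a - c), sq_nonneg (b - c), sq_nonneg (a - e),
          sq_nonneg (b - e), sq_nonneg (c - e)]
    refine (e1 _ _ _ _).trans ?_
    have c1 : (6 - 12 * p) ^ 2 ≤ 36 := by nlinarith
    have c2 : (4 - 12 * p + 12 * p ^ 2) ^ 2 ≤ 16 := by
      have : 0 ≤ 4 - 12 * p + 12 * p ^ 2 := by nlinarith [sq_nonneg (p - 1 / 2)]
      have : 4 - 12 * p + 12 * p ^ 2 ≤ 4 := by nlinarith
      nlinarith
    have c3 : ((1 - p) ^ 4 - p ^ 4) ^ 2 ≤ 1 := by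
      have a1 : (1 - p) ^ 4 ≤ 1 := pow_le_one₀ h5 (by linarith)
      have a2 : p ^ 4 ≤ 1 := pow_le_one₀ h6 (by linarith)
      have a3 : 0 ≤ (1 - p) ^ 4 := by positivity
      have a4 : 0 ≤ p ^ 4 := by positivity
      nlinarith
    have c4 : ((6 - 12 * p) * v ^ 2) ^ 2 ≤ 36 * v ^ 4 := by
      have e : ((6 - 12 * p) * v ^ 2) ^ 2 = (6 - 12 * p) ^ 2 * v ^ 4 := by ring
      rw [e]
      gcongr
    have c5 : ((4 - 12 * p + 12 * p ^ 2) * v) ^ 2 ≤ 16 * v ^ 2 := by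
      rw [mul_pow]
      gcongr
    have : v + q - q = v := by ring
    rw [this]
    have e2 : (4 * v ^ 3) ^ 2 = 16 * v ^ 6 := by ring
    rw [e2]
    linarith
  have b1 := cmom_six_le_cube n t d hqd hd1
  have b2 := cmom_four_le_cube n t d hqd hd1
  have b3 : cmom n t 2 ≤ d ^ 3 := by
    have : d ≤ d ^ 3 := le_self_pow₀ hd1 (by norm_num)
    linarith
  have b4 : 1 ≤ d ^ 3 := one_le_pow₀ hd1
  linarith

/-- The typical behaviour of the bin deviations `w` from the mean load `d` along the filter `l`: the
power sums of order `2, 3, 4` agree with `n d`, `n d` and `3 n d²` to the stated precision, the sixth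
power sum is `O(d⁵)`, expressed as `ε · (∑ w⁶)/d⁵ → 0` for every null sequence `ε`, and the
correlations of `w` and `w²` with the centred planting `δ` are negligible. -/
structure Conc (l : Filter Cfg) (d : ℕ → ℝ) (δ : (n : ℕ) → Fin n → ℝ)
    (w : (x : Cfg) → Fin x.1 → ℝ) : Prop where
  X2 : Tendsto (fun x : Cfg => (∑ i, w x i ^ 2 - x.1 * d x.1) / (x.1 * d x.1)) l (𝓝 0)
  X3 : Tendsto (fun x : Cfg => (∑ i, w x i ^ 3 - x.1 * d x.1) / (√x.1 * d x.1 ^ 2)) l (𝓝 0)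
  X4 : Tendsto (fun x : Cfg => (∑ i, w x i ^ 4 - 3 * x.1 * d x.1 ^ 2) / (√x.1 * d x.1 ^ 3)) l (𝓝 0)
  Y1 : Tendsto (fun x : Cfg => (∑ i, δ x.1 i * w x i) / d x.1) l (𝓝 0)
  Y2 : Tendsto (fun x : Cfg => (∑ i, δ x.1 i * w x i ^ 2) / d x.1 ^ 2) l (𝓝 0)
  X6 : ∀ ε : ℕ → ℝ, Tendsto ε atTop (𝓝 0) →
    Tendsto (fun x : Cfg => ε x.1 * ((∑ i, w x i ^ 6) / d x.1 ^ 5)) l (𝓝 0)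

lemma tendsto_inv_sqrt : Tendsto (fun n : ℕ => (√(n : ℝ))⁻¹) atTop (𝓝 0) :=
  tendsto_inv_atTop_zero.comp (Real.tendsto_sqrt_atTop.comp tendsto_natCast_atTop_atTop)

lemma tendsto_inv_nat : Tendsto (fun n : ℕ => (n : ℝ)⁻¹) atTop (𝓝 0) :=
  tendsto_inv_atTop_zero.comp tendsto_natCast_atTop_atTop

lemma tendsto_bdd_mul {ι : Type*} {l : Filter ι} {f g : ι → ℝ} (C : ℝ)
    (hf : ∀ᶠ x in l, |f x| ≤ C) (hg : Tendsto g l (𝓝 0)) :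
    Tendsto (fun x => f x * g x) l (𝓝 0) := by
  refine squeeze_zero_norm' (a := fun x => C * |g x|) ?_ ?_
  · filter_upwards [hf] with x hx
    rw [Real.norm_eq_abs, abs_mul]
    gcongr
  · simpa using (hg.abs.const_mul C)

lemma eventually_basic (m : ℕ → ℕ) (d : ℕ → ℝ) (hdm : ∀ n, d n = (m n : ℝ) / n)
    (hd : Tendsto d atTop atTop) : ∀ᶠ n in atTop, 0 < n ∧ 0 < m n ∧ 1 ≤ d n := by
  filter_upwards [eventually_gt_atTop 0, hd.eventually_ge_atTop 1] with n hn h1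
  refine ⟨hn, ?_, h1⟩
  rw [hdm] at h1
  by_contra h
  have : m n = 0 := by omega
  simp [this] at h1
  linarith

lemma conc_X2 (m : ℕ → ℕ) (d : ℕ → ℝ) (hdm : ∀ n, d n = (m n : ℝ) / n)
    (hd : Tendsto d atTop atTop) : Tendsto (fun x : Cfg => (∑ i, ((x.2 i : ℝ) - d x.1) ^ 2 - x.1 * d x.1) /
    (x.1 * d x.1)) (ballFilter m) (𝓝 0) := by
  have hb := eventually_basic m d hdm hd
  refine tendsto_ballFilter_of_var m (hb.mono fun n h => h.2.1)
    (fun n _ y => ((y : ℝ) - d n) ^ 2) (fun n => n * d n) (fun n => n * d n)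
    (fun n => d n * (n * (10 * d n))) ?_ ?_ ?_
  · filter_upwards [hb] with n ⟨hn, hm, h1⟩
    rw [← hdm, Finset.sum_const, Finset.card_univ, Fintype.card_fin, nsmul_eq_mul]
    gcongr
    refine margE_diff_two n (m n - 1) (d n) ?_ h1
    rw [hdm, Nat.sub_add_cancel hm]
  · refine Tendsto.congr' ?_ (by simpa using tendsto_inv_nat.const_mul 10)
    filter_upwards [hb] with n ⟨hn, hm, h1⟩
    have : (n : ℝ) ≠ 0 := by positivity
    have : d n ≠ 0 := by positivity
    field_simp
  · refine Tendsto.congr' ?_ (by simpa using tendsto_inv_nat.const_mul (-1))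
    filter_upwards [hb] with n ⟨hn, hm, h1⟩
    rw [Finset.sum_const, Finset.card_univ, Fintype.card_fin, nsmul_eq_mul]
    have e : margE n (m n) (fun y => ((y : ℝ) - d n) ^ 2) = d n * (1 - (n : ℝ)⁻¹) := by
      rw [hdm]
      change cmom n (m n) 2 = _
      rw [cmom_two]
      ring
    rw [e]
    have : (n : ℝ) ≠ 0 := by positivity
    have : d n ≠ 0 := by positivity
    field_simp
    ring

lemma conc_X3 (m : ℕ → ℕ) (d : ℕ → ℝ) (hdm : ∀ n, d n = (m n : ℝ) / n)
    (hd : Tendsto d atTop atTop) : Tendsto (fun x : Cfg => (∑ i, ((x.2 i : ℝ) - d x.1) ^ 3 - x.1 * d x.1) /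
    (√x.1 * d x.1 ^ 2)) (ballFilter m) (𝓝 0) := by
  have hb := eventually_basic m d hdm hd
  have hdi : Tendsto (fun n => (d n)⁻¹) atTop (𝓝 0) := tendsto_inv_atTop_zero.comp hd
  refine tendsto_ballFilter_of_var m (hb.mono fun n h => h.2.1)
    (fun n _ y => ((y : ℝ) - d n) ^ 3) (fun n => n * d n) (fun n => √n * d n ^ 2)
    (fun n => d n * (n * (138 * d n ^ 2))) ?_ ?_ ?_
  · filter_upwards [hb] with n ⟨hn, hm, h1⟩
    rw [← hdm, Finset.sum_const, Finset.card_univ, Fintype.card_fin, nsmul_eq_mul]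
    gcongr
    refine margE_diff_three n (m n - 1) (d n) ?_ h1
    rw [hdm, Nat.sub_add_cancel hm]
  · refine Tendsto.congr' ?_ (by simpa using hdi.const_mul 138)
    filter_upwards [hb] with n ⟨hn, hm, h1⟩
    have : (n : ℝ) ≠ 0 := by positivity
    have : d n ≠ 0 := by positivity
    rw [mul_pow, Real.sq_sqrt (by positivity)]
    field_simp
  · have h1 : Tendsto (fun n : ℕ => (-3 + 2 * (n : ℝ)⁻¹) * ((√(n : ℝ))⁻¹ * (d n)⁻¹)) atTop (𝓝 0) := by
      have := ((tendsto_inv_nat.const_mul 2).const_add (-3)).mul (tendsto_inv_sqrt.mul hdi)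
      simpa using this
    refine Tendsto.congr' ?_ h1
    filter_upwards [hb] with n ⟨hn, hm, h1⟩
    rw [Finset.sum_const, Finset.card_univ, Fintype.card_fin, nsmul_eq_mul]
    have e : margE n (m n) (fun y => ((y : ℝ) - d n) ^ 3) =
        d n * ((1 - (n : ℝ)⁻¹) * (1 - 2 * (n : ℝ)⁻¹)) := by
      rw [hdm]
      change cmom n (m n) 3 = _
      rw [cmom_three]
      ring
    rw [e]
    have : (n : ℝ) ≠ 0 := by positivity
    have : d n ≠ 0 := by positivity
    have : √(n : ℝ) ≠ 0 := by positivity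
    field_simp
    ring

lemma conc_X4 (m : ℕ → ℕ) (d : ℕ → ℝ) (hdm : ∀ n, d n = (m n : ℝ) / n)
    (hd : Tendsto d atTop atTop) (C : ℝ) (hC : ∀ᶠ n : ℕ in atTop, |√n / d n| ≤ C) :
    Tendsto (fun x : Cfg => (∑ i, ((x.2 i : ℝ) - d x.1) ^ 4 - 3 * x.1 * d x.1 ^ 2) /
    (√x.1 * d x.1 ^ 3)) (ballFilter m) (𝓝 0) := by
  have hb := eventually_basic m d hdm hd
  have hdi : Tendsto (fun n => (d n)⁻¹) atTop (𝓝 0) := tendsto_inv_atTop_zero.comp hd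
  have hsd := tendsto_bdd_mul C hC hdi
  refine tendsto_ballFilter_of_var m (hb.mono fun n h => h.2.1)
    (fun n _ y => ((y : ℝ) - d n) ^ 4) (fun n => 3 * n * d n ^ 2) (fun n => √n * d n ^ 3)
    (fun n => d n * (n * (7000 * d n ^ 3))) ?_ ?_ ?_
  · filter_upwards [hb] with n ⟨hn, hm, h1⟩
    rw [← hdm, Finset.sum_const, Finset.card_univ, Fintype.card_fin, nsmul_eq_mul]
    gcongr
    refine margE_diff_four n (m n - 1) (d n) ?_ h1
    rw [hdm, Nat.sub_add_cancel hm]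
  · refine Tendsto.congr' ?_ (by simpa using (hdi.pow 2).const_mul 7000)
    filter_upwards [hb] with n ⟨hn, hm, h1⟩
    have : (n : ℝ) ≠ 0 := by positivity
    have : d n ≠ 0 := by positivity
    rw [mul_pow, Real.sq_sqrt (by positivity)]
    field_simp
  · have h1 : Tendsto (fun n : ℕ => 3 * (-2 + (n : ℝ)⁻¹) * ((√(n : ℝ))⁻¹ * (d n)⁻¹)
        + (-3) * (1 - (n : ℝ)⁻¹) ^ 2 * ((√(n : ℝ))⁻¹ * (d n)⁻¹ ^ 2)
        + (√n / d n * (d n)⁻¹) * ((1 - (n : ℝ)⁻¹) * (n : ℝ)⁻¹ ^ 3 + (1 - (n : ℝ)⁻¹) ^ 4))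
        atTop (𝓝 0) := by
      have := ((((tendsto_inv_nat.const_add (-2)).const_mul 3).mul (tendsto_inv_sqrt.mul hdi)).add
        ((((tendsto_inv_nat.const_sub 1).pow 2).const_mul (-3)).mul
          (tendsto_inv_sqrt.mul (hdi.pow 2)))).add
        (hsd.mul (((tendsto_inv_nat.const_sub 1).mul (tendsto_inv_nat.pow 3)).add
          ((tendsto_inv_nat.const_sub 1).pow 4)))
      simpa using this
    refine Tendsto.congr' ?_ h1
    filter_upwards [hb] with n ⟨hn, hm, h1⟩
    rw [Finset.sum_const, Finset.card_univ, Fintype.card_fin, nsmul_eq_mul]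
    have e : margE n (m n) (fun y => ((y : ℝ) - d n) ^ 4) =
        3 * d n * (d n - (n : ℝ)⁻¹) * (1 - (n : ℝ)⁻¹) ^ 2 +
        d n * ((1 - (n : ℝ)⁻¹) * (n : ℝ)⁻¹ ^ 3 + (1 - (n : ℝ)⁻¹) ^ 4) := by
      rw [hdm]
      change cmom n (m n) 4 = _
      rw [cmom_four]
      ring
    rw [e]
    have hs : (n : ℝ) = √(n : ℝ) ^ 2 := (Real.sq_sqrt (by positivity)).symm
    have : d n ≠ 0 := by positivity
    have : √(n : ℝ) ≠ 0 := by positivity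
    generalize √(n : ℝ) = s at *
    rw [hs]
    field_simp
    ring

lemma conc_X6 (m : ℕ → ℕ) (d : ℕ → ℝ) (hdm : ∀ n, d n = (m n : ℝ) / n)
    (hd : Tendsto d atTop atTop) (C : ℝ)
    (hC : ∀ᶠ n : ℕ in atTop, |√n / d n| ≤ C)
    (ε : ℕ → ℝ) (hε : Tendsto ε atTop (𝓝 0)) :
    Tendsto (fun x : Cfg => ε x.1 * ((∑ i, ((x.2 i : ℝ) - d x.1) ^ 6) / d x.1 ^ 5))
      (ballFilter m) (𝓝 0) := by
  have hb := eventually_basic m d hdm hd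
  rw [tendsto_zero_iff_abs_tendsto_zero]
  refine tendsto_ballFilter_of_mean m _ (fun x => abs_nonneg _) ?_
  have h1 : Tendsto (fun n : ℕ => 96 * C ^ 2 * |ε n|) atTop (𝓝 0) := by
    simpa using hε.abs.const_mul (96 * C ^ 2)
  refine tendsto_of_tendsto_of_tendsto_of_le_of_le' tendsto_const_nhds h1 ?_ ?_
  · filter_upwards [eventually_gt_atTop 0] with n hn
    rw [← ballE_const n (m n) hn 0]
    exact ballE_mono _ _ fun z => abs_nonneg _
  · filter_upwards [hb, hC] with n ⟨hn, hm, hd1⟩ hCn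
    have hd0 : 0 < d n := by linarith
    have e1 : ballE n (m n) (fun z => |ε n * ((∑ i, ((z i : ℝ) - d n) ^ 6) / d n ^ 5)|) =
        (|ε n| / d n ^ 5) * ballE n (m n) (fun z => ∑ i, ((z i : ℝ) - d n) ^ 6) := by
      rw [← ballE_mul]
      congr 1
      funext z
      have : 0 ≤ (∑ i, ((z i : ℝ) - d n) ^ 6) / d n ^ 5 :=
        div_nonneg (Finset.sum_nonneg fun i _ => by positivity) (by positivity)
      rw [abs_mul, abs_of_nonneg this]
      ring
    have e2 : ballE n (m n) (fun z => ∑ i, ((z i : ℝ) - d n) ^ 6) ≤ n * (96 * d n ^ 3) := by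
      rw [ballE_sum n (m n) hn (fun _ y => ((y : ℝ) - d n) ^ 6), Finset.sum_const,
        Finset.card_univ, Fintype.card_fin, nsmul_eq_mul]
      gcongr
      have := cmom_six_le_cube n (m n) (d n) (by rw [hdm]) hd1
      rw [cmom, ← hdm] at this
      exact this
    change ballE n (m n) (fun z => |ε n * ((∑ i, ((z i : ℝ) - d n) ^ 6) / d n ^ 5)|) ≤ _
    rw [e1]
    calc (|ε n| / d n ^ 5) * ballE n (m n) (fun z => ∑ i, ((z i : ℝ) - d n) ^ 6)
        ≤ (|ε n| / d n ^ 5) * (n * (96 * d n ^ 3)) := by gcongr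
      _ = 96 * (√n / d n) ^ 2 * |ε n| := by
        rw [div_pow, Real.sq_sqrt (by positivity)]
        field_simp
      _ ≤ 96 * C ^ 2 * |ε n| := by
        gcongr 96 * ?_ * |ε n|
        rw [← sq_abs]
        gcongr

lemma conc_Y1 (m : ℕ → ℕ) (d : ℕ → ℝ) (hdm : ∀ n, d n = (m n : ℝ) / n)
    (hd : Tendsto d atTop atTop)
    (δ : (n : ℕ) → Fin n → ℝ)
    (hδ2 : Tendsto (fun n => (∑ i, δ n i ^ 2) / d n) atTop (𝓝 0)) :
    Tendsto (fun x : Cfg => (∑ i, δ x.1 i * ((x.2 i : ℝ) - d x.1)) / d x.1)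
      (ballFilter m) (𝓝 0) := by
  have hb := eventually_basic m d hdm hd
  have key := tendsto_ballFilter_of_var m (hb.mono fun n h => h.2.1)
    (fun n i y => δ n i * ((y : ℝ) - d n)) (fun n => 0) d
    (fun n => d n * ∑ i, δ n i ^ 2) ?_ ?_ ?_
  · simpa using key
  · filter_upwards [hb] with n ⟨hn, hm, h1⟩
    rw [← hdm]
    gcongr with i
    have : (fun x : ℕ => (δ n i * (((x + 1 : ℕ) : ℝ) - d n) - δ n i * ((x : ℝ) - d n)) ^ 2) =
        fun _ => δ n i ^ 2 := by
      funext x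
      push_cast
      ring
    rw [this, margE_const]
  · refine Tendsto.congr' ?_ hδ2
    filter_upwards [hb] with n ⟨hn, hm, h1⟩
    have : d n ≠ 0 := by positivity
    field_simp
  · refine Tendsto.congr (fun n => ?_) tendsto_const_nhds
    have : ∑ i, margE n (m n) (fun y => δ n i * ((y : ℝ) - d n)) = 0 := by
      refine Finset.sum_eq_zero fun i _ => ?_
      rw [margE_mul]
      have h := cmom_one n (m n)
      simp only [cmom, pow_one, ← hdm] at h
      rw [h, mul_zero]
    simp [this]

lemma conc_Y2 (m : ℕ → ℕ) (d : ℕ → ℝ) (hdm : ∀ n, d n = (m n : ℝ) / n)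
    (hd : Tendsto d atTop atTop)
    (δ : (n : ℕ) → Fin n → ℝ) (hδ : ∀ n, ∑ i, δ n i = 0)
    (hδ2 : Tendsto (fun n => (∑ i, δ n i ^ 2) / d n) atTop (𝓝 0)) :
    Tendsto (fun x : Cfg => (∑ i, δ x.1 i * ((x.2 i : ℝ) - d x.1) ^ 2) / d x.1 ^ 2)
      (ballFilter m) (𝓝 0) := by
  have hb := eventually_basic m d hdm hd
  have hdi : Tendsto (fun n => (d n)⁻¹) atTop (𝓝 0) := tendsto_inv_atTop_zero.comp hd
  have key := tendsto_ballFilter_of_var m (hb.mono fun n h => h.2.1)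
    (fun n i y => δ n i * ((y : ℝ) - d n) ^ 2) (fun n => 0) (fun n => d n ^ 2)
    (fun n => d n * ∑ i, δ n i ^ 2 * (10 * d n)) ?_ ?_ ?_
  · simpa using key
  · filter_upwards [hb] with n ⟨hn, hm, h1⟩
    rw [← hdm]
    gcongr with i
    have : (fun x : ℕ => (δ n i * (((x + 1 : ℕ) : ℝ) - d n) ^ 2 -
        δ n i * ((x : ℝ) - d n) ^ 2) ^ 2) =
        fun x : ℕ => δ n i ^ 2 * ((((x + 1 : ℕ) : ℝ) - d n) ^ 2 - ((x : ℝ) - d n) ^ 2) ^ 2 := by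
      funext x
      ring
    rw [this, margE_mul]
    gcongr
    refine margE_diff_two n (m n - 1) (d n) ?_ h1
    rw [hdm, Nat.sub_add_cancel hm]
  · have h1 := (hδ2.mul hdi).const_mul 10
    simp only [mul_zero] at h1
    refine Tendsto.congr' ?_ h1
    filter_upwards [hb] with n ⟨hn, hm, h1⟩
    have : d n ≠ 0 := by positivity
    rw [← Finset.sum_mul]
    field_simp
  · refine Tendsto.congr (fun n => ?_) tendsto_const_nhds
    have : ∑ i, margE n (m n) (fun y => δ n i * ((y : ℝ) - d n) ^ 2) = 0 := by
      simp only [margE_mul]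
      rw [← Finset.sum_mul, hδ, zero_mul]
    simp [this]

/-- Independent uniform throws satisfy `Conc` when `d → ∞`, `√n = O(d)`, `∑ δ = 0` and
`∑ δ² = o(d)`. -/
lemma conc_ball (m : ℕ → ℕ) (d : ℕ → ℝ) (hdm : ∀ n, d n = (m n : ℝ) / n)
    (hd : Tendsto d atTop atTop) (C : ℝ)
    (hC : ∀ᶠ n : ℕ in atTop, |√n / d n| ≤ C)
    (δ : (n : ℕ) → Fin n → ℝ) (hδ : ∀ n, ∑ i, δ n i = 0)
    (hδ2 : Tendsto (fun n => (∑ i, δ n i ^ 2) / d n) atTop (𝓝 0)) :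
    Conc (ballFilter m) d δ (fun x i => (x.2 i : ℝ) - d x.1) where
  X2 := conc_X2 m d hdm hd
  X3 := conc_X3 m d hdm hd
  X4 := conc_X4 m d hdm hd C hC
  X6 := conc_X6 m d hdm hd C hC
  Y1 := conc_Y1 m d hdm hd δ hδ2
  Y2 := conc_Y2 m d hdm hd δ hδ hδ2

/-! ### Scaling in the flat regime -/

/-- The deterministic consequences of the flat regime: `d = m/n` is the mean load, `μ = k/n` the mean
planting and `δ = A - μ` the centred planting. -/
structure Scal (d μ : ℕ → ℝ) (δ : (n : ℕ) → Fin n → ℝ) (C : ℝ) : Prop where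
  hd : Tendsto d atTop atTop
  hμ : ∀ᶠ n in atTop, 0 < μ n
  hr : Tendsto (fun n : ℕ => μ n / d n * √n) atTop (𝓝 C)
  hρ : ∃ K : ℝ, ∀ᶠ n : ℕ in atTop, |√n / d n| ≤ K
  hδ : ∀ n, ∑ i, δ n i = 0
  hδ2 : Tendsto (fun n => (∑ i, δ n i ^ 2) / d n) atTop (𝓝 0)

lemma plantV_eq (n : ℕ) (hn : 0 < n) (a : Fin n → ℕ) :
    ∑ i, ((a i : ℝ) - (∑ i, (a i : ℝ)) / n) ^ 2 = n * plantV n a := by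
  have hn' : (n : ℝ) ≠ 0 := by positivity
  set S := ∑ i, (a i : ℝ) with hS
  have h1 : ∀ i, ((a i : ℝ) - S / n) ^ 2 = (a i : ℝ) ^ 2 - 2 * (S / n) * a i + (S / n) ^ 2 :=
    fun i => by ring
  simp only [h1, Finset.sum_add_distrib, Finset.sum_sub_distrib, ← Finset.mul_sum, ← hS, plantV]
  rw [Finset.sum_const, Finset.card_univ, Fintype.card_fin, nsmul_eq_mul]
  field_simp
  ring

/-- Integrality of the planting, `a ≤ a²`, bounds `V(A)` from below. -/
lemma plantV_ge (n : ℕ) (a : Fin n → ℕ) :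
    (∑ i, (a i : ℝ)) / n - ((∑ i, (a i : ℝ)) / n) ^ 2 ≤ plantV n a := by
  rw [plantV]
  gcongr with i
  have : a i ≤ a i ^ 2 := Nat.le_self_pow (by norm_num) _
  exact_mod_cast this

lemma rpow_three_half (n : ℕ) : (n : ℝ) ^ ((3 : ℝ) / 2) = n * √n := by
  rw [show (3 : ℝ) / 2 = 1 + 1 / 2 by norm_num, Real.rpow_add' (by positivity) (by norm_num),
    Real.rpow_one, Real.sqrt_eq_rpow]

lemma scal_of_flat (A : (n : ℕ) → Fin n → ℕ) (m k : ℕ → ℕ)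
    (hka : ∀ n, ∑ i, A n i = k n) (c : ℝ) (hc : 0 < c) (hreg : FlatRegime A m k c) :
    Scal (fun n => (m n : ℝ) / n) (fun n => (k n : ℝ) / n)
      (fun n i => (A n i : ℝ) - (k n : ℝ) / n) c⁻¹ := by
  obtain ⟨h1, h2⟩ := hreg
  have hka' : ∀ n, ∑ i, (A n i : ℝ) = k n := fun n => by exact_mod_cast hka n
  have hpos : ∀ᶠ n : ℕ in atTop, (0 : ℝ) < n ∧ (0 : ℝ) < k n ∧ (0 : ℝ) < m n := by
    filter_upwards [h2.eventually_const_lt hc, eventually_gt_atTop 0] with n h hn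
    refine ⟨by exact_mod_cast hn, ?_, ?_⟩
    · rcases Nat.eq_zero_or_pos (k n) with h0 | h0
      · simp [h0] at h
      · exact_mod_cast h0
    · rcases Nat.eq_zero_or_pos (m n) with h0 | h0
      · simp [h0] at h
      · exact_mod_cast h0
  have hr : Tendsto (fun n : ℕ => (k n : ℝ) / n / ((m n : ℝ) / n) * √n) atTop (𝓝 c⁻¹) := by
    refine Tendsto.congr' ?_ (h2.inv₀ hc.ne')
    filter_upwards [hpos] with n ⟨hn, hk, hm⟩
    field_simp
  have hs : Tendsto (fun n : ℕ => √(n : ℝ)) atTop atTop :=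
    Real.tendsto_sqrt_atTop.comp tendsto_natCast_atTop_atTop
  -- If `μ < 1/2`, then `V(A)/μ ≥ 1 - μ > 1/2`, against `√n V(A)/μ → 0`.
  have hμ2 : ∀ᶠ n : ℕ in atTop, 1 / 2 ≤ (k n : ℝ) / n := by
    filter_upwards [h1.eventually_lt_const (show (0 : ℝ) < 1 / 2 by norm_num), hpos,
      hs.eventually_ge_atTop 1] with n h ⟨hn, hk, hm⟩ hs1
    have hV := plantV_ge n (A n)
    rw [hka'] at hV
    rw [rpow_three_half, mul_assoc] at h
    have e : (n : ℝ) * (√n * plantV n (A n)) / k n = √n * (plantV n (A n) / (k n / n)) := by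
      field_simp
    rw [e] at h
    set μ := (k n : ℝ) / n
    have hμ : 0 < μ := by positivity
    have h3 : 1 - μ ≤ plantV n (A n) / μ := by
      rw [le_div_iff₀ hμ]
      linarith
    by_contra h4
    push Not at h4
    nlinarith
  have hR : ∀ᶠ n : ℕ in atTop, (k n : ℝ) / n / ((m n : ℝ) / n) * √n ≤ c⁻¹ + 1 :=
    hr.eventually_le_const (by linarith)
  have hρ : ∀ᶠ n : ℕ in atTop, √n / ((m n : ℝ) / n) ≤ 2 * (c⁻¹ + 1) := by
    filter_upwards [hR, hμ2, hpos] with n h hμ ⟨hn, hk, hm⟩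
    have e : (k n : ℝ) / n / ((m n : ℝ) / n) * √n = (k n : ℝ) / n * (√n / ((m n : ℝ) / n)) := by
      ring
    rw [e] at h
    have : 0 ≤ √n / ((m n : ℝ) / n) := by positivity
    nlinarith
  have hC0 : 0 < 2 * (c⁻¹ + 1) := by positivity
  refine ⟨?_, ?_, hr, ⟨2 * (c⁻¹ + 1), ?_⟩, ?_, ?_⟩
  · refine tendsto_atTop_mono' _ ?_ (hs.atTop_div_const hC0)
    filter_upwards [hρ, hpos] with n h ⟨hn, hk, hm⟩
    rw [div_le_iff₀ (by positivity)] at h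
    rw [div_le_iff₀ hC0]
    linarith
  · filter_upwards [hpos] with n ⟨hn, hk, hm⟩
    positivity
  · filter_upwards [hρ] with n h
    rwa [abs_of_nonneg (by positivity)]
  · intro n
    rcases Nat.eq_zero_or_pos n with rfl | hn
    · simp
    · rw [Finset.sum_sub_distrib, hka', Finset.sum_const, Finset.card_univ, Fintype.card_fin,
        nsmul_eq_mul]
      have : (n : ℝ) ≠ 0 := by positivity
      field_simp
      ring
  · have := h1.mul hr
    rw [zero_mul] at this
    refine Tendsto.congr' ?_ this
    filter_upwards [hpos] with n ⟨hn, hk, hm⟩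
    have e := plantV_eq n (by exact_mod_cast hn) (A n)
    rw [hka'] at e
    rw [e, rpow_three_half]
    have : √(n : ℝ) * √n = n := Real.mul_self_sqrt hn.le
    have hs0 : 0 < √(n : ℝ) := by positivity
    generalize √(n : ℝ) = s at *
    rw [← this]
    field_simp

/-! ### Stability of the concentration estimates -/

lemma Scal.tau {d μ : ℕ → ℝ} {δ : (n : ℕ) → Fin n → ℝ} {C : ℝ} (S : Scal d μ δ C) :
    Tendsto (fun n => μ n / d n) atTop (𝓝 0) := by
  have := S.hr.mul tendsto_inv_sqrt
  rw [mul_zero] at this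
  refine Tendsto.congr' ?_ this
  filter_upwards [eventually_gt_atTop 0] with n hn
  have : √(n : ℝ) ≠ 0 := by positivity
  field_simp

lemma Scal.basic {d μ : ℕ → ℝ} {δ : (n : ℕ) → Fin n → ℝ} {C : ℝ} (S : Scal d μ δ C) :
    ∀ᶠ n : ℕ in atTop, 0 < n ∧ 1 ≤ d n ∧ 0 < μ n ∧ μ n ≤ d n / 2 ∧ 0 < d n - μ n := by
  filter_upwards [eventually_gt_atTop 0, S.hd.eventually_ge_atTop 1, S.hμ,
    S.tau.eventually_le_const (show (0 : ℝ) < 1 / 2 by norm_num)] with n hn h1 h2 h3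
  rw [div_le_iff₀ (by linarith)] at h3
  exact ⟨hn, h1, h2, by linarith, by linarith⟩

lemma Scal.hdi {d μ : ℕ → ℝ} {δ : (n : ℕ) → Fin n → ℝ} {C : ℝ} (S : Scal d μ δ C) :
    Tendsto (fun n => (d n)⁻¹) atTop (𝓝 0) := tendsto_inv_atTop_zero.comp S.hd

lemma Scal.max_delta {d μ : ℕ → ℝ} {δ : (n : ℕ) → Fin n → ℝ} {C : ℝ} (S : Scal d μ δ C)
    (η : ℝ) (hη : 0 < η) : ∀ᶠ n in atTop, ∀ i, |δ n i| ≤ η * d n := by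
  filter_upwards [S.basic, S.hδ2.eventually_le_const (show (0 : ℝ) < η ^ 2 by positivity)]
    with n ⟨hn, h1, _⟩ h i
  have hd0 : 0 < d n := by linarith
  rw [div_le_iff₀ hd0] at h
  have h3 : δ n i ^ 2 ≤ ∑ i, δ n i ^ 2 :=
    Finset.single_le_sum (f := fun i => δ n i ^ 2) (fun i _ => sq_nonneg _) (Finset.mem_univ i)
  refine abs_le_of_sq_le_sq ?_ (by positivity)
  nlinarith [sq_nonneg η, mul_nonneg (sq_nonneg η) (mul_nonneg hd0.le (sub_nonneg.2 h1))]

/-- A single sixth power is at most the sixth power sum, which is `O(d⁵) = o(d⁶)`. -/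
lemma Conc.max_w {l : Filter Cfg} (hl : Tendsto Sigma.fst l atTop) {d : ℕ → ℝ}
    {δ : (n : ℕ) → Fin n → ℝ} {w : (x : Cfg) → Fin x.1 → ℝ} (H : Conc l d δ w)
    (hd : Tendsto d atTop atTop) (η : ℝ) (hη : 0 < η) :
    ∀ᶠ x in l, ∀ i, |w x i| ≤ η * d x.1 := by
  have h := H.X6 (fun n => (d n)⁻¹) (tendsto_inv_atTop_zero.comp hd)
  filter_upwards [h.eventually_le_const (show (0 : ℝ) < η ^ 6 by positivity),
    (hd.comp hl).eventually_ge_atTop 1] with x hx h1 i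
  simp only [Function.comp_apply] at h1
  have hd0 : 0 < d x.1 := by linarith
  have h3 : w x i ^ 6 ≤ ∑ i, w x i ^ 6 :=
    Finset.single_le_sum (f := fun i => w x i ^ 6) (fun i _ => by positivity) (Finset.mem_univ i)
  have h4 : (∑ i, w x i ^ 6) ≤ (η * d x.1) ^ 6 := by
    have e : (d x.1)⁻¹ * ((∑ i, w x i ^ 6) / d x.1 ^ 5) = (∑ i, w x i ^ 6) / d x.1 ^ 6 := by
      field_simp
    rw [e, div_le_iff₀ (by positivity)] at hx
    rw [mul_pow]
    exact hx
  have h5 : |w x i| ^ 6 ≤ (η * d x.1) ^ 6 := by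
    rw [Even.pow_abs (by decide)]
    exact h3.trans h4
  exact le_of_pow_le_pow_left₀ (by norm_num) (by positivity) h5

lemma cross_three {ι : Type*} [Fintype ι] (a b : ι → ℝ) :
    (∑ i, |a i| * |b i| ^ 3) ^ 2 ≤ (∑ i, a i ^ 2) * ∑ i, b i ^ 6 := by
  have := Finset.sum_mul_sq_le_sq_mul_sq Finset.univ (fun i => |a i|) (fun i => |b i| ^ 3)
  have e : ∀ i, (|b i| ^ 3) ^ 2 = b i ^ 6 := fun i => by
    rw [← pow_mul, Even.pow_abs (by decide)]
  simpa only [sq_abs, e] using this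

lemma Conc.cross {l : Filter Cfg} (hl : Tendsto Sigma.fst l atTop) {d μ : ℕ → ℝ}
    {δ : (n : ℕ) → Fin n → ℝ} {C : ℝ} (S : Scal d μ δ C)
    {w : (x : Cfg) → Fin x.1 → ℝ}
    (H6 : ∀ ε : ℕ → ℝ, Tendsto ε atTop (𝓝 0) →
      Tendsto (fun x : Cfg => ε x.1 * ((∑ i, w x i ^ 6) / d x.1 ^ 5)) l (𝓝 0)) :
    Tendsto (fun x : Cfg => (∑ i, |δ x.1 i| * |w x i| ^ 3) / d x.1 ^ 3) l (𝓝 0) := by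
  apply tendsto_zero_of_sq
  refine tendsto_of_tendsto_of_tendsto_of_le_of_le' tendsto_const_nhds (H6 _ S.hδ2)
    (Eventually.of_forall fun x => sq_nonneg _) ?_
  filter_upwards [hl.eventually S.basic] with x ⟨hn, h1, _⟩
  have hd0 : 0 < d x.1 := by linarith
  have e : (∑ i, δ x.1 i ^ 2) / d x.1 * ((∑ i, w x i ^ 6) / d x.1 ^ 5) =
      ((∑ i, δ x.1 i ^ 2) * ∑ i, w x i ^ 6) / (d x.1 ^ 3) ^ 2 := by
    field_simp
  rw [e, div_pow]
  gcongr
  exact cross_three _ _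

/-- `Conc` is insensitive to replacing the mean load `d` by `d - μ`. -/
lemma Conc.rescale {l : Filter Cfg} (hl : Tendsto Sigma.fst l atTop) {d μ : ℕ → ℝ}
    {δ : (n : ℕ) → Fin n → ℝ} {C : ℝ} (S : Scal d μ δ C)
    {w : (x : Cfg) → Fin x.1 → ℝ} (H : Conc l (fun n => d n - μ n) δ w) : Conc l d δ w := by
  have hq : Tendsto (fun x : Cfg => (d x.1 - μ x.1) / d x.1) l (𝓝 1) := by
    have h := (S.tau.const_sub 1).comp hl
    rw [sub_zero] at h
    refine Tendsto.congr' ?_ h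
    filter_upwards [hl.eventually S.basic] with x ⟨hn, h1, _⟩
    have : d x.1 ≠ 0 := by positivity
    simp only [Function.comp_apply]
    field_simp
  have hb := hl.eventually S.basic
  obtain ⟨K, hK⟩ := S.hρ
  refine ⟨?_, ?_, ?_, ?_, ?_, ?_⟩
  · have h := (H.X2.mul hq).add (hq.sub_const 1)
    rw [zero_mul, sub_self, add_zero] at h
    refine Tendsto.congr' ?_ h
    filter_upwards [hb] with x ⟨hn, h1, _, _, hD⟩
    have : d x.1 ≠ 0 := by positivity
    have : (x.1 : ℝ) ≠ 0 := by positivity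
    field_simp
    ring
  · have h := (H.X3.mul (hq.pow 2)).sub ((S.hr.mul S.hdi).comp hl)
    rw [zero_mul, mul_zero, sub_zero] at h
    refine Tendsto.congr' ?_ h
    filter_upwards [hb] with x ⟨hn, h1, _, _, hD⟩
    have : d x.1 ≠ 0 := by positivity
    have hs : (x.1 : ℝ) = √(x.1 : ℝ) ^ 2 := (Real.sq_sqrt (by positivity)).symm
    have : √(x.1 : ℝ) ≠ 0 := by positivity
    simp only [Function.comp_apply]
    generalize √(x.1 : ℝ) = s at *
    rw [hs]
    field_simp
    ring
  · have h := (H.X4.mul (hq.pow 3)).add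
      (tendsto_bdd_mul K (hl.eventually hK) (((hq.pow 2).sub_const 1).const_mul 3 |>.trans
        (by norm_num)))
    rw [zero_mul, zero_add] at h
    refine Tendsto.congr' ?_ h
    filter_upwards [hb] with x ⟨hn, h1, _, _, hD⟩
    have : d x.1 ≠ 0 := by positivity
    have hs : (x.1 : ℝ) = √(x.1 : ℝ) ^ 2 := (Real.sq_sqrt (by positivity)).symm
    have : √(x.1 : ℝ) ≠ 0 := by positivity
    generalize √(x.1 : ℝ) = s at *
    rw [hs]
    field_simp
    ring
  · have h := H.Y1.mul hq
    rw [zero_mul] at h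
    refine Tendsto.congr' ?_ h
    filter_upwards [hb] with x ⟨hn, h1, _, _, hD⟩
    field_simp
  · have h := H.Y2.mul (hq.pow 2)
    rw [zero_mul] at h
    refine Tendsto.congr' ?_ h
    filter_upwards [hb] with x ⟨hn, h1, _, _, hD⟩
    field_simp
  · intro ε hε
    have h := (H.X6 ε hε).mul (hq.pow 5)
    rw [zero_mul] at h
    refine Tendsto.congr' ?_ h
    filter_upwards [hb] with x ⟨hn, h1, _, _, hD⟩
    field_simp

lemma abs_sum_sq_mul_le {ι : Type*} [Fintype ι] (a g : ι → ℝ) (B : ℝ) (h : ∀ i, |g i| ≤ B) :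
    |∑ i, a i ^ 2 * g i| ≤ B * ∑ i, a i ^ 2 := by
  refine (Finset.abs_sum_le_sum_abs _ _).trans ?_
  rw [Finset.mul_sum]
  refine Finset.sum_le_sum fun i _ => ?_
  rw [abs_mul, abs_of_nonneg (sq_nonneg _), mul_comm]
  exact mul_le_mul_of_nonneg_right (h i) (sq_nonneg _)

lemma tendsto_sq_mul {l : Filter Cfg} (hl : Tendsto Sigma.fst l atTop) {d μ : ℕ → ℝ}
    {δ : (n : ℕ) → Fin n → ℝ} {C : ℝ} (S : Scal d μ δ C) (p : ℕ)
    (g : (x : Cfg) → Fin x.1 → ℝ) (hg : ∀ᶠ x in l, ∀ i, |g x i| ≤ d x.1 ^ p) :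
    Tendsto (fun x : Cfg => (∑ i, δ x.1 i ^ 2 * g x i) / d x.1 ^ (p + 1)) l (𝓝 0) := by
  refine squeeze_zero_norm' ?_ (S.hδ2.comp hl)
  filter_upwards [hl.eventually S.basic, hg] with x ⟨hn, h1, _⟩ hx
  have hd0 : 0 < d x.1 := by linarith
  rw [Real.norm_eq_abs, abs_div, abs_of_pos (pow_pos hd0 (p + 1)), div_le_iff₀ (by positivity)]
  refine (abs_sum_sq_mul_le _ _ _ hx).trans (le_of_eq ?_)
  simp only [Function.comp_apply]
  field_simp
  ring

/-- `Conc` survives adding the centred planting to the deviations, since `∑ δ² = o(d)`. -/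
lemma Conc.shift {l : Filter Cfg} (hl : Tendsto Sigma.fst l atTop) {d μ : ℕ → ℝ}
    {δ : (n : ℕ) → Fin n → ℝ} {C : ℝ} (S : Scal d μ δ C)
    {v : (x : Cfg) → Fin x.1 → ℝ} (H : Conc l d δ v) :
    Conc l d δ (fun x i => v x i + δ x.1 i) := by
  have hb := hl.eventually S.basic
  have hv : ∀ᶠ x in l, ∀ i, |v x i| ≤ d x.1 := by
    simpa using H.max_w hl S.hd 1 one_pos
  have hδ : ∀ᶠ x in l, ∀ i, |δ x.1 i| ≤ d x.1 := by
    simpa using hl.eventually (S.max_delta 1 one_pos)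
  have hs : Tendsto (fun x : Cfg => (√(x.1 : ℝ))⁻¹) l (𝓝 0) := tendsto_inv_sqrt.comp hl
  have hni : Tendsto (fun x : Cfg => ((x.1 : ℝ))⁻¹) l (𝓝 0) := tendsto_inv_nat.comp hl
  have q0 : Tendsto (fun x : Cfg => (∑ i, δ x.1 i ^ 2) / d x.1) l (𝓝 0) := S.hδ2.comp hl
  have qv := tendsto_sq_mul hl S 1 v (by simpa using hv)
  have qd := tendsto_sq_mul hl S 1 (fun x => δ x.1) (by simpa using hδ)
  have qvv := tendsto_sq_mul hl S 2 (fun x i => v x i ^ 2) (by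
    filter_upwards [hv] with x hx i
    rw [abs_pow]
    exact pow_le_pow_left₀ (abs_nonneg _) (hx i) 2)
  have qdv := tendsto_sq_mul hl S 2 (fun x i => δ x.1 i * v x i) (by
    filter_upwards [hv, hδ] with x hx hy i
    rw [abs_mul, sq]
    exact mul_le_mul (hy i) (hx i) (abs_nonneg _) ((abs_nonneg _).trans (hx i)))
  have qdd := tendsto_sq_mul hl S 2 (fun x i => δ x.1 i ^ 2) (by
    filter_upwards [hδ] with x hx i
    rw [abs_pow]
    exact pow_le_pow_left₀ (abs_nonneg _) (hx i) 2)
  have qd4 := tendsto_sq_mul hl S 4 (fun x i => δ x.1 i ^ 4) (by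
    filter_upwards [hδ] with x hx i
    rw [abs_pow]
    exact pow_le_pow_left₀ (abs_nonneg _) (hx i) 4)
  have qc : Tendsto (fun x : Cfg => (∑ i, δ x.1 i * v x i ^ 3) / d x.1 ^ 3) l (𝓝 0) := by
    refine squeeze_zero_norm' ?_ (Conc.cross hl S H.X6)
    filter_upwards [hb] with x ⟨hn, h1, _⟩
    have hd0 : 0 < d x.1 := by linarith
    rw [Real.norm_eq_abs, abs_div, abs_of_pos (pow_pos hd0 3)]
    gcongr
    refine (Finset.abs_sum_le_sum_abs _ _).trans (le_of_eq ?_)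
    simp only [abs_mul, abs_pow]
  refine ⟨?_, ?_, ?_, ?_, ?_, ?_⟩
  · have h := H.X2.add ((H.Y1.const_mul 2).add q0 |>.mul hni)
    simp only [mul_zero, add_zero] at h
    refine Tendsto.congr' ?_ h
    filter_upwards [hb] with x ⟨hn, h1, _, _, hD⟩
    have : d x.1 ≠ 0 := by positivity
    have : (x.1 : ℝ) ≠ 0 := by positivity
    have e : ∑ i, (v x i + δ x.1 i) ^ 2 =
        ∑ i, v x i ^ 2 + 2 * ∑ i, δ x.1 i * v x i + ∑ i, δ x.1 i ^ 2 := by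
      rw [Finset.mul_sum, ← Finset.sum_add_distrib, ← Finset.sum_add_distrib]
      exact Finset.sum_congr rfl fun i _ => by ring
    rw [e]
    field_simp
    ring
  · have h := H.X3.add (((H.Y2.const_mul 3).add ((qv.const_mul 3).add qd)).mul hs)
    simp only [mul_zero, add_zero] at h
    refine Tendsto.congr' ?_ h
    filter_upwards [hb] with x ⟨hn, h1, _, _, hD⟩
    have : d x.1 ≠ 0 := by positivity
    have : √(x.1 : ℝ) ≠ 0 := by positivity
    have e : ∑ i, (v x i + δ x.1 i) ^ 3 =
        ∑ i, v x i ^ 3 + 3 * ∑ i, δ x.1 i * v x i ^ 2 + 3 * ∑ i, δ x.1 i ^ 2 * v x i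
          + ∑ i, δ x.1 i ^ 2 * δ x.1 i := by
      simp only [Finset.mul_sum, ← Finset.sum_add_distrib]
      exact Finset.sum_congr rfl fun i _ => by ring
    rw [e]
    field_simp
    ring
  · have h := H.X4.add (((qc.const_mul 4).add ((qvv.const_mul 6).add
      ((qdv.const_mul 4).add qdd))).mul hs)
    simp only [mul_zero, add_zero] at h
    refine Tendsto.congr' ?_ h
    filter_upwards [hb] with x ⟨hn, h1, _, _, hD⟩
    have : d x.1 ≠ 0 := by positivity
    have : √(x.1 : ℝ) ≠ 0 := by positivity
    have e : ∑ i, (v x i + δ x.1 i) ^ 4 =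
        ∑ i, v x i ^ 4 + 4 * ∑ i, δ x.1 i * v x i ^ 3 + 6 * ∑ i, δ x.1 i ^ 2 * v x i ^ 2
          + 4 * ∑ i, δ x.1 i ^ 2 * (δ x.1 i * v x i) + ∑ i, δ x.1 i ^ 2 * δ x.1 i ^ 2 := by
      simp only [Finset.mul_sum, ← Finset.sum_add_distrib]
      exact Finset.sum_congr rfl fun i _ => by ring
    rw [e]
    field_simp
    ring
  · have h := H.Y1.add q0
    simp only [add_zero] at h
    refine Tendsto.congr' ?_ h
    filter_upwards [hb] with x ⟨hn, h1, _, _, hD⟩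
    have e : ∑ i, δ x.1 i * (v x i + δ x.1 i) =
        ∑ i, δ x.1 i * v x i + ∑ i, δ x.1 i ^ 2 := by
      simp only [← Finset.sum_add_distrib]
      exact Finset.sum_congr rfl fun i _ => by ring
    rw [e, add_div]
  · have h := H.Y2.add ((qv.const_mul 2).add qd)
    simp only [mul_zero, add_zero] at h
    refine Tendsto.congr' ?_ h
    filter_upwards [hb] with x ⟨hn, h1, _, _, hD⟩
    have e : ∑ i, δ x.1 i * (v x i + δ x.1 i) ^ 2 =
        ∑ i, δ x.1 i * v x i ^ 2 + (2 * ∑ i, δ x.1 i ^ 2 * v x i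
          + ∑ i, δ x.1 i ^ 2 * δ x.1 i) := by
      simp only [Finset.mul_sum, ← Finset.sum_add_distrib]
      exact Finset.sum_congr rfl fun i _ => by ring
    rw [e, add_div, add_div, mul_div_assoc]
  · intro ε hε
    have h := ((H.X6 ε hε).abs.const_mul 32).add (((hε.comp hl).mul qd4).abs.const_mul 32)
    simp only [mul_zero, add_zero, abs_zero] at h
    refine squeeze_zero_norm' ?_ h
    filter_upwards [hb] with x ⟨hn, h1, _, _, hD⟩
    have hd0 : 0 < d x.1 := by linarith
    have h6 : ∑ i, (v x i + δ x.1 i) ^ 6 ≤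
        32 * ∑ i, v x i ^ 6 + 32 * ∑ i, δ x.1 i ^ 2 * δ x.1 i ^ 4 := by
      simp only [Finset.mul_sum, ← Finset.sum_add_distrib]
      refine Finset.sum_le_sum fun i _ => ?_
      have := Even.add_pow_le (a := v x i) (b := δ x.1 i) (n := 6) (by decide)
      norm_num at this
      nlinarith
    have p1 : 0 ≤ ∑ i, (v x i + δ x.1 i) ^ 6 := Finset.sum_nonneg fun i _ => by positivity
    have p2 : 0 ≤ ∑ i, v x i ^ 6 := Finset.sum_nonneg fun i _ => by positivity
    have p3 : 0 ≤ ∑ i, δ x.1 i ^ 2 * δ x.1 i ^ 4 := Finset.sum_nonneg fun i _ => by positivity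
    simp only [Function.comp_apply]
    rw [Real.norm_eq_abs, abs_mul, abs_mul, abs_mul, abs_of_nonneg (div_nonneg p1 (by positivity)),
      abs_of_nonneg (div_nonneg p2 (by positivity)), abs_of_nonneg (div_nonneg p3 (by positivity))]
    have e : 32 * (|ε x.1| * ((∑ i, v x i ^ 6) / d x.1 ^ 5)) +
        32 * (|ε x.1| * ((∑ i, δ x.1 i ^ 2 * δ x.1 i ^ 4) / d x.1 ^ (4 + 1))) =
        |ε x.1| * ((32 * ∑ i, v x i ^ 6 + 32 * ∑ i, δ x.1 i ^ 2 * δ x.1 i ^ 4) / d x.1 ^ 5) := by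
      ring
    rw [e]
    gcongr

/-! ### Estimates for factorials and integrals of the logarithm -/

/-- The primitive `x log x - x` of the logarithm. -/
noncomputable def entH (x : ℝ) : ℝ := x * Real.log x - x

lemma hasDerivAt_entH {x : ℝ} (hx : 0 < x) : HasDerivAt entH (Real.log x) x := by
  have h := ((hasDerivAt_id x).mul (Real.hasDerivAt_log hx.ne')).sub (hasDerivAt_id x)
  refine h.congr_deriv ?_
  simp only [id]
  field_simp
  ring

lemma log_one_add_four {t : ℝ} (ht : |t| ≤ 1 / 2) :
    |Real.log (1 + t) - t + t ^ 2 / 2 - t ^ 3 / 3 + t ^ 4 / 4| ≤ 2 * |t| ^ 5 := by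
  have h := Real.abs_log_sub_add_sum_range_le (x := -t) (by rw [abs_neg]; linarith) 4
  simp only [Finset.sum_range_succ, Finset.sum_range_zero, abs_neg] at h
  norm_num at h
  have e : -t + t ^ 2 / 2 + (-t) ^ 3 / 3 + t ^ 4 / 4 + Real.log (1 + t) =
      Real.log (1 + t) - t + t ^ 2 / 2 - t ^ 3 / 3 + t ^ 4 / 4 := by ring
  rw [e] at h
  refine h.trans ?_
  rw [div_le_iff₀ (by linarith)]
  have : 0 ≤ |t| ^ 5 := by positivity
  nlinarith

lemma log_one_add_two {t : ℝ} (ht : |t| ≤ 1 / 2) :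
    |Real.log (1 + t) - t + t ^ 2 / 2| ≤ 2 * |t| ^ 3 := by
  have h := Real.abs_log_sub_add_sum_range_le (x := -t) (by rw [abs_neg]; linarith) 2
  simp only [Finset.sum_range_succ, Finset.sum_range_zero, abs_neg] at h
  norm_num at h
  have e : -t + t ^ 2 / 2 + Real.log (1 + t) = Real.log (1 + t) - t + t ^ 2 / 2 := by ring
  rw [e] at h
  refine h.trans ?_
  rw [div_le_iff₀ (by linarith)]
  have : 0 ≤ |t| ^ 3 := by positivity
  nlinarith

/-- Error of the midpoint rule for `∫ log` over `[x - 1/2, x + 1/2]`. -/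
noncomputable def midErr (x : ℝ) : ℝ := Real.log x - (entH (x + 1 / 2) - entH (x - 1 / 2))

lemma midErr_bound {x : ℝ} (hx : 1 ≤ x) : |midErr x - 1 / (24 * x ^ 2)| ≤ 1 / x ^ 4 := by
  have hx0 : 0 < x := by linarith
  obtain ⟨t, ht⟩ : ∃ t, t = 1 / (2 * x) := ⟨_, rfl⟩
  have ht0 : 0 < t := by rw [ht]; positivity
  have ht2 : t ≤ 1 / 2 := by
    rw [ht, div_le_div_iff₀ (by positivity) (by norm_num)]
    linarith
  have hxt : x * t = 1 / 2 := by rw [ht]; field_simp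
  have e1 : x + 1 / 2 = x * (1 + t) := by rw [mul_add, hxt]; ring
  have e2 : x - 1 / 2 = x * (1 - t) := by rw [mul_sub, hxt]; ring
  have l1 := log_one_add_four (t := t) (by rw [abs_of_pos ht0]; exact ht2)
  have l2 := log_one_add_four (t := -t) (by rw [abs_neg, abs_of_pos ht0]; exact ht2)
  rw [abs_neg] at l2
  rw [abs_of_pos ht0] at l1 l2
  have e3 : midErr x - 1 / (24 * x ^ 2) =
      x * (-((1 + t) * (Real.log (1 + t) - t + t ^ 2 / 2 - t ^ 3 / 3 + t ^ 4 / 4)) +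
        (1 - t) * (Real.log (1 + -t) - -t + (-t) ^ 2 / 2 - (-t) ^ 3 / 3 + (-t) ^ 4 / 4)
        + t ^ 5 / 2) := by
    have e4 : 1 / (24 * x ^ 2) = t ^ 2 / 6 := by rw [ht]; field_simp; norm_num
    rw [midErr, entH, entH, e1, e2, Real.log_mul hx0.ne' (by linarith),
      Real.log_mul hx0.ne' (by linarith), e4, ← sub_eq_add_neg]
    have e5 : t ^ 2 / 6 = x * t * (t ^ 2 / 3) := by rw [hxt]; ring
    have e6 : Real.log x = 2 * (x * t) * Real.log x := by rw [hxt]; ring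
    rw [e5]
    nth_rw 1 [e6]
    ring
  rw [e3]
  set E1 := Real.log (1 + t) - t + t ^ 2 / 2 - t ^ 3 / 3 + t ^ 4 / 4
  set E2 := Real.log (1 + -t) - -t + (-t) ^ 2 / 2 - (-t) ^ 3 / 3 + (-t) ^ 4 / 4
  have h5 : 0 < t ^ 5 := by positivity
  rw [abs_le] at l1 l2
  have e7 : 1 / x ^ 4 = x * (32 * t ^ 5) := by rw [ht]; field_simp; norm_num
  rw [e7, abs_mul, abs_of_pos hx0]
  refine mul_le_mul_of_nonneg_left ?_ hx0.le
  rw [abs_le]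
  constructor <;> nlinarith

/-- A falling factorial is a sum of logarithms; the midpoint rule replaces the sum by an integral, with
an error close to `a κ` when `κ` is the typical midpoint error. -/
lemma log_descFactorial_bound (z : ℕ) (κ B : ℝ) (a : ℕ) (ha : a ≤ z)
    (h : ∀ x : ℝ, 1 ≤ x → (z : ℝ) - a + 1 ≤ x → x ≤ z → |midErr x - κ| ≤ B) :
    |Real.log (z.descFactorial a) - (entH (z + 1 / 2) - entH (z - a + 1 / 2)) - a * κ| ≤
      a * B := by
  induction a with
  | zero => simp
  | succ a ih =>
    have ih' := ih (by omega) fun x h1 h2 h3 => h x h1 (by push_cast; linarith) h3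
    have haz : (a : ℝ) + 1 ≤ z := by exact_mod_cast ha
    have hb := h (z - a) (by linarith) (by push_cast; linarith) (by
      have : (0 : ℝ) ≤ a := by positivity
      linarith)
    have hpos : (0 : ℝ) < z.descFactorial a := by
      exact_mod_cast Nat.descFactorial_pos.2 (by omega)
    have e : Real.log (z.descFactorial (a + 1)) =
        Real.log (z - a) + Real.log (z.descFactorial a) := by
      rw [Nat.descFactorial_succ, Nat.cast_mul, Nat.cast_sub (by omega),
        Real.log_mul (by linarith) hpos.ne']
    rw [e]
    rw [midErr] at hb
    push_cast
    have e1 : (z : ℝ) - (a + 1) + 1 / 2 = z - a - 1 / 2 := by ring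
    rw [e1]
    rw [abs_le] at *
    constructor <;> linarith

/-- Convexity of `x log x - x`. -/
lemma entH_tangent {a b : ℝ} (ha : 0 < a) (hb : 0 < b) :
    (b - a) * Real.log a ≤ entH b - entH a := by
  have h := Real.log_le_sub_one_of_pos (div_pos ha hb)
  rw [Real.log_div ha.ne' hb.ne'] at h
  have h2 := mul_le_mul_of_nonneg_left h hb.le
  have e : b * (a / b - 1) = a - b := by field_simp
  rw [e] at h2
  rw [entH, entH]
  linarith

lemma midErr_near {d η x : ℝ} (hd : 2 ≤ d) (hη : 0 < η) (hη4 : η ≤ 1 / 4)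
    (hx : |x - d| ≤ η * d) : |midErr x - 1 / (24 * d ^ 2)| ≤ (η + 4 / d ^ 2) / d ^ 2 := by
  have hd0 : 0 < d := by linarith
  have h1 : 3 / 4 * d ≤ x := by
    have := (abs_le.1 hx).1
    nlinarith
  have h2 : x ≤ 5 / 4 * d := by
    have := (abs_le.1 hx).2
    nlinarith
  have hx0 : 0 < x := by linarith
  have hb := midErr_bound (x := x) (by linarith)
  have h3 : 1 / x ^ 4 ≤ 4 / d ^ 4 := by
    rw [div_le_div_iff₀ (by positivity) (by positivity)]
    have : (3 / 4 * d) ^ 4 ≤ x ^ 4 := by gcongr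
    have : 0 < d ^ 4 := by positivity
    nlinarith
  have h4 : |1 / (24 * x ^ 2) - 1 / (24 * d ^ 2)| ≤ η / d ^ 2 := by
    have e : 1 / (24 * x ^ 2) - 1 / (24 * d ^ 2) = (x - d) * (-(x + d) / (24 * x ^ 2 * d ^ 2)) := by
      field_simp
      ring
    rw [e, abs_mul, abs_div, abs_neg, abs_of_pos (by positivity : 0 < x + d),
      abs_of_pos (by positivity : 0 < 24 * x ^ 2 * d ^ 2)]
    calc |x - d| * ((x + d) / (24 * x ^ 2 * d ^ 2))
        ≤ (η * d) * ((3 * d) / (24 * (3 / 4 * d) ^ 2 * d ^ 2)) := by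
          gcongr
          linarith
      _ = η / d ^ 2 * (3 / (24 * (3 / 4) ^ 2)) := by field_simp
      _ ≤ η / d ^ 2 * 1 := by gcongr; norm_num
      _ = _ := by ring
  have e5 : (η + 4 / d ^ 2) / d ^ 2 = η / d ^ 2 + 4 / d ^ 4 := by field_simp
  rw [e5, abs_le]
  rw [abs_le] at hb h4
  constructor <;> linarith

/-- Fourth order expansion in `u` of `∫_D^d log(1 + u/θ) dθ`, with a remainder proportional to
`d - D`. -/
lemma entH_two_point {d D u : ℝ} (hD : 0 < D) (hDd : D ≤ d) (hu : |u| ≤ D / 2) :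
    |entH (d + u) - entH (D + u) - entH d + entH D -
      (Real.log (d / D) * u - (1 / D - 1 / d) * u ^ 2 / 2 + (1 / D ^ 2 - 1 / d ^ 2) * u ^ 3 / 6
        - (1 / D ^ 3 - 1 / d ^ 3) * u ^ 4 / 12)| ≤ 2 * (|u| / D) ^ 5 * (d - D) := by
  let ψ : ℝ → ℝ := fun θ => entH (θ + u) - entH θ - u * Real.log θ - u ^ 2 / 2 * θ⁻¹
    + u ^ 3 / 6 * (θ⁻¹ ^ 2) - u ^ 4 / 12 * (θ⁻¹ ^ 3)
  have hu' := abs_le.1 hu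
  have hder : ∀ θ ∈ Set.Icc D d, HasDerivWithinAt ψ
      (Real.log (1 + u / θ) - u / θ + (u / θ) ^ 2 / 2 - (u / θ) ^ 3 / 3 + (u / θ) ^ 4 / 4)
      (Set.Icc D d) θ := by
    intro θ hθ
    have hθ0 : 0 < θ := hD.trans_le hθ.1
    have hθu : 0 < θ + u := by linarith [hθ.1]
    have hi := hasDerivAt_inv hθ0.ne'
    have h1 : HasDerivAt (fun θ => entH (θ + u)) (Real.log (θ + u)) θ := by
      have := (hasDerivAt_entH hθu).comp_add_const θ u
      exact this
    have h := ((((h1.sub (hasDerivAt_entH hθ0)).sub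
      ((Real.hasDerivAt_log hθ0.ne').const_mul u)).sub (hi.const_mul (u ^ 2 / 2))).add
      ((hi.pow 2).const_mul (u ^ 3 / 6))).sub ((hi.pow 3).const_mul (u ^ 4 / 12))
    refine (h.congr_deriv ?_).hasDerivWithinAt
    have e : (1 : ℝ) + u / θ = (θ + u) / θ := by field_simp
    rw [e, Real.log_div hθu.ne' hθ0.ne']
    simp only [Nat.add_one_sub_one, pow_one]
    push_cast
    field_simp
    ring
  have hbd : ∀ θ ∈ Set.Icc D d,
      ‖Real.log (1 + u / θ) - u / θ + (u / θ) ^ 2 / 2 - (u / θ) ^ 3 / 3 + (u / θ) ^ 4 / 4‖ ≤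
        2 * (|u| / D) ^ 5 := by
    intro θ hθ
    have hθ0 : 0 < θ := hD.trans_le hθ.1
    have e : |u / θ| ≤ |u| / D := by
      rw [abs_div, abs_of_pos hθ0]
      gcongr
      exact hθ.1
    have e2 : |u| / D ≤ 1 / 2 := by
      rw [div_le_iff₀ hD]
      linarith
    refine (log_one_add_four (e.trans e2)).trans ?_
    gcongr
  have := (convex_Icc D d).norm_image_sub_le_of_norm_hasDerivWithin_le hder hbd
    (Set.left_mem_Icc.2 hDd) (Set.right_mem_Icc.2 hDd)
  rw [Real.norm_eq_abs, Real.norm_eq_abs, abs_of_nonneg (sub_nonneg.2 hDd)] at this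
  refine le_of_eq_of_le ?_ this
  congr 1
  have hd0 : 0 < d := hD.trans_le hDd
  simp only [ψ]
  rw [Real.log_div hd0.ne' hD.ne']
  ring

/-- Effect of moving the lower endpoint by `δ`, expanded to second order in `u` and first order in
`δ`. -/
lemma entH_shift {D u δ : ℝ} (hD : 0 < D) (hu : |u| ≤ D / 2) (hδ : |δ| ≤ D / 4) :
    |entH (D + u) - entH (D + u - δ) -
      (δ * Real.log D + δ * u / D - δ * u ^ 2 / (2 * D ^ 2))| ≤
      2 * (|δ| * |u| ^ 3) / D ^ 3 + 4 * δ ^ 2 / D := by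
  have hu' := abs_le.1 hu
  have hδ' := abs_le.1 hδ
  have hy : D / 4 ≤ D + u := by linarith
  have hb : D / 4 ≤ D + u - δ := by linarith
  have hy0 : 0 < D + u := by linarith
  have hb0 : 0 < D + u - δ := by linarith
  have t1 := entH_tangent hy0 hb0
  have t2 := entH_tangent hb0 hy0
  have t3 : δ * Real.log (D + u) - δ * Real.log (D + u - δ) ≤ 4 * δ ^ 2 / D := by
    rcases le_total 0 δ with h | h
    · have l := Real.log_le_sub_one_of_pos (div_pos hy0 hb0)
      rw [Real.log_div hy0.ne' hb0.ne'] at l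
      calc δ * Real.log (D + u) - δ * Real.log (D + u - δ)
          = δ * (Real.log (D + u) - Real.log (D + u - δ)) := by ring
        _ ≤ δ * ((D + u) / (D + u - δ) - 1) := by gcongr
        _ = δ ^ 2 / (D + u - δ) := by field_simp; ring
        _ ≤ δ ^ 2 / (D / 4) := by gcongr
        _ = _ := by field_simp
    · have l := Real.log_le_sub_one_of_pos (div_pos hb0 hy0)
      rw [Real.log_div hb0.ne' hy0.ne'] at l
      calc δ * Real.log (D + u) - δ * Real.log (D + u - δ)
          = -δ * (Real.log (D + u - δ) - Real.log (D + u)) := by ring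
        _ ≤ -δ * ((D + u - δ) / (D + u) - 1) := by
            gcongr
            linarith
        _ = δ ^ 2 / (D + u) := by field_simp; ring
        _ ≤ δ ^ 2 / (D / 4) := by gcongr
        _ = _ := by field_simp
  have l := log_one_add_two (t := u / D) (by
    rw [abs_div, abs_of_pos hD, div_le_iff₀ hD]
    linarith)
  have e : Real.log (1 + u / D) = Real.log (D + u) - Real.log D := by
    rw [← Real.log_div hy0.ne' hD.ne']
    congr 1
    field_simp
  rw [e] at l
  have l2 : |δ * (Real.log (D + u) - Real.log D - u / D + (u / D) ^ 2 / 2)| ≤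
      2 * (|δ| * |u| ^ 3) / D ^ 3 := by
    rw [abs_mul]
    calc |δ| * |Real.log (D + u) - Real.log D - u / D + (u / D) ^ 2 / 2|
        ≤ |δ| * (2 * |u / D| ^ 3) := by gcongr
      _ = _ := by
        rw [abs_div, abs_of_pos hD]
        field_simp
  have e2 : δ * (Real.log (D + u) - Real.log D - u / D + (u / D) ^ 2 / 2) =
      δ * Real.log (D + u) - (δ * Real.log D + δ * u / D - δ * u ^ 2 / (2 * D ^ 2)) := by
    field_simp
    ring
  rw [e2, abs_le] at l2
  rw [abs_le]
  have : 0 ≤ 4 * δ ^ 2 / D := by positivity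
  constructor <;> linarith

/-! ### The main expansion -/

/-- The deterministic heart of the argument. The first four summands are the fourth order expansion of
the log-likelihood ratio summed over the bins, with shifted power sums `∑ (w + 1/2)^p` written through
`∑ w^p`; adding the midpoint correction and the leading part `(μ/d²) ∑ w²/2` of `F_A/2` and subtracting
`μ_F/2` leaves `o(1)`. -/
lemma main_tendsto {l : Filter Cfg} (hl : Tendsto Sigma.fst l atTop) {d μ : ℕ → ℝ}
    {δ : (n : ℕ) → Fin n → ℝ} {C : ℝ} (S : Scal d μ δ C)
    {w : (x : Cfg) → Fin x.1 → ℝ} (H : Conc l d δ w) :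
    Tendsto (fun x : Cfg =>
      Real.log (d x.1 / (d x.1 - μ x.1)) * (x.1 / 2)
      - (1 / (d x.1 - μ x.1) - 1 / d x.1) * (∑ i, w x i ^ 2 + x.1 / 4) / 2
      + (1 / (d x.1 - μ x.1) ^ 2 - 1 / d x.1 ^ 2) *
          (∑ i, w x i ^ 3 + 3 / 2 * ∑ i, w x i ^ 2 + x.1 / 8) / 6
      - (1 / (d x.1 - μ x.1) ^ 3 - 1 / d x.1 ^ 3) *
          (∑ i, w x i ^ 4 + 2 * ∑ i, w x i ^ 3 + 3 / 2 * ∑ i, w x i ^ 2 + x.1 / 16) / 12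
      + x.1 * μ x.1 / (24 * d x.1 ^ 2) + μ x.1 / d x.1 ^ 2 * (∑ i, w x i ^ 2) / 2
      - (x.1 * (μ x.1 / d x.1) - x.1 * (μ x.1 / d x.1) ^ 2 / 2) / 2) l (𝓝 0) := by
  have hb := hl.eventually S.basic
  obtain ⟨K, hK⟩ := S.hρ
  have hK := hl.eventually hK
  have hr : Tendsto (fun x : Cfg => μ x.1 / d x.1 * √(x.1 : ℝ)) l (𝓝 C) := S.hr.comp hl
  have hτ : Tendsto (fun x : Cfg => μ x.1 / d x.1) l (𝓝 0) := S.tau.comp hl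
  have hdi : Tendsto (fun x : Cfg => (d x.1)⁻¹) l (𝓝 0) := S.hdi.comp hl
  have hP : Tendsto (fun x : Cfg => (1 - μ x.1 / d x.1)⁻¹) l (𝓝 1) := by
    have := (hτ.const_sub 1).inv₀ (by norm_num)
    simpa using this
  have hQ3 : Tendsto (fun x : Cfg => (1 - μ x.1 / d x.1 / 2) * (1 - μ x.1 / d x.1)⁻¹ ^ 2) l
      (𝓝 1) := by
    have := ((hτ.div_const 2).const_sub 1).mul (hP.pow 2)
    simpa using this
  have hQ4 : Tendsto (fun x : Cfg => (1 - μ x.1 / d x.1 + (μ x.1 / d x.1) ^ 2 / 3) *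
      (1 - μ x.1 / d x.1)⁻¹ ^ 3) l (𝓝 1) := by
    have := ((hτ.const_sub 1).add ((hτ.pow 2).div_const 3)).mul (hP.pow 3)
    simpa using this
  have hA : Tendsto (fun x : Cfg => (Real.log (d x.1 / (d x.1 - μ x.1)) - μ x.1 / d x.1
      - (μ x.1 / d x.1) ^ 2 / 2) * (x.1 / 2)) l (𝓝 0) := by
    have h := (hr.pow 2).mul hτ
    rw [mul_zero] at h
    refine squeeze_zero_norm' ?_ h
    filter_upwards [hb] with x ⟨hn, h1, h2, h3, hD⟩
    have hd0 : 0 < d x.1 := by linarith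
    have ht0 : 0 < μ x.1 / d x.1 := by positivity
    have ht2 : μ x.1 / d x.1 ≤ 1 / 2 := by rw [div_le_iff₀ hd0]; linarith
    have e : Real.log (d x.1 / (d x.1 - μ x.1)) = -Real.log (1 + -(μ x.1 / d x.1)) := by
      rw [← Real.log_inv]
      congr 1
      have : 1 + -(μ x.1 / d x.1) = (d x.1 - μ x.1) / d x.1 := by field_simp; ring
      rw [this, inv_div]
    have hlog := log_one_add_two (t := -(μ x.1 / d x.1)) (by
      rw [abs_neg, abs_of_pos ht0]; exact ht2)
    rw [abs_neg, abs_of_pos ht0] at hlog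
    rw [e, Real.norm_eq_abs, abs_mul, abs_of_nonneg (by positivity : (0 : ℝ) ≤ (x.1 : ℝ) / 2),
      mul_pow, Real.sq_sqrt (by positivity)]
    have e2 : -Real.log (1 + -(μ x.1 / d x.1)) - μ x.1 / d x.1 - (μ x.1 / d x.1) ^ 2 / 2 =
        -(Real.log (1 + -(μ x.1 / d x.1)) - -(μ x.1 / d x.1) + (-(μ x.1 / d x.1)) ^ 2 / 2) := by
      ring
    rw [e2, abs_neg]
    calc _ ≤ 2 * (μ x.1 / d x.1) ^ 3 * (x.1 / 2) := by gcongr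
      _ = _ := by ring
  -- With `t = μ/d`, `r = t √n` and `ρ = √n/d`, the expression is split by order: `hA` is the cubic
  -- remainder of `log`, `hB` has the factor `r²`, `hC` the bounded factor `r ρ` and `hE` the factor `r`.
  have hX := H.X2.const_add 1
  have hB : Tendsto (fun x : Cfg => (μ x.1 / d x.1 * √(x.1 : ℝ)) ^ 2 / 2 *
      (1 - (1 - μ x.1 / d x.1)⁻¹ *
        (1 + (∑ i, w x i ^ 2 - x.1 * d x.1) / (x.1 * d x.1)))) l (𝓝 0) := by
    have h := ((hr.pow 2).div_const 2).mul ((hP.mul hX).const_sub 1)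
    simpa using h
  have hC : Tendsto (fun x : Cfg =>
      -(1 - μ x.1 / d x.1)⁻¹ / 8
      + (1 - μ x.1 / d x.1 / 2) * (1 - μ x.1 / d x.1)⁻¹ ^ 2 *
        (1 / 3 + (1 + (∑ i, w x i ^ 2 - x.1 * d x.1) / (x.1 * d x.1)) / 2 + (d x.1)⁻¹ / 24)
      - (1 - μ x.1 / d x.1 + (μ x.1 / d x.1) ^ 2 / 3) * (1 - μ x.1 / d x.1)⁻¹ ^ 3 *
        (3 / 4 + (d x.1)⁻¹ / 2
          + 3 / 8 * (1 + (∑ i, w x i ^ 2 - x.1 * d x.1) / (x.1 * d x.1)) * (d x.1)⁻¹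
          + (d x.1)⁻¹ ^ 2 / 64)
      + 1 / 24) l (𝓝 0) := by
    have h := (((hP.neg.div_const 8).add (hQ3.mul (((hX.div_const 2).const_add (1 / 3)).add
      (hdi.div_const 24)))).sub (hQ4.mul ((((hdi.div_const 2).const_add (3 / 4)).add
        ((hX.const_mul (3 / 8)).mul hdi)).add ((hdi.pow 2).div_const 64)))).add_const (1 / 24)
    -- The limit is `-1/8 + (1/3 + 1/2) - 3/4 + 1/24 = 0`.
    exact h.trans (le_of_eq (by norm_num))
  have hC' := hr.mul (tendsto_bdd_mul K hK hC)
  rw [mul_zero] at hC'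
  have hE := hr.mul (((hQ3.mul H.X3).div_const 3).sub ((hQ4.mul H.X4).div_const 4) |>.sub
    ((hQ4.mul H.X3).mul hdi |>.div_const 2))
  norm_num at hE
  have hT := ((hA.add hB).add hC').add hE
  simp only [add_zero] at hT
  refine Tendsto.congr' ?_ hT
  filter_upwards [hb] with x ⟨hn, h1, h2, h3, hD⟩
  have hd0 : 0 < d x.1 := by linarith
  have hn0 : (0 : ℝ) < x.1 := by exact_mod_cast hn
  have hs0 : 0 < √(x.1 : ℝ) := by positivity
  have hs : (x.1 : ℝ) = √(x.1 : ℝ) ^ 2 := (Real.sq_sqrt (by positivity)).symm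
  have ht1 : 0 < 1 - μ x.1 / d x.1 := by
    have : μ x.1 / d x.1 ≤ 1 / 2 := by rw [div_le_iff₀ hd0]; linarith
    linarith
  have eD : d x.1 - μ x.1 = d x.1 * (1 - μ x.1 / d x.1) := by field_simp
  have eμ : μ x.1 = μ x.1 / d x.1 * d x.1 := by field_simp
  have eμ2 : μ x.1 / d x.1 ^ 2 = μ x.1 / d x.1 / d x.1 := by field_simp
  have eμ3 : x.1 * μ x.1 / (24 * d x.1 ^ 2) = x.1 * (μ x.1 / d x.1) / (24 * d x.1) := by
    field_simp
  rw [eμ2, eμ3]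
  generalize Real.log (d x.1 / (d x.1 - μ x.1)) = L
  rw [eD]
  generalize μ x.1 / d x.1 = t at *
  generalize ∑ i, w x i ^ 2 = S2
  generalize ∑ i, w x i ^ 3 = S3
  generalize ∑ i, w x i ^ 4 = S4
  generalize d x.1 = e at *
  generalize √(x.1 : ℝ) = s at *
  rw [hs]
  obtain ⟨P, hPdef⟩ : ∃ P, P = 1 - t := ⟨_, rfl⟩
  have hP0 : P ≠ 0 := by rw [hPdef]; exact ht1.ne'
  have htP : t = 1 - P := by rw [hPdef]; ring
  rw [← hPdef, htP]
  field_simp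
  ring

/-! ### Error terms -/

lemma tendsto_of_eta {ι : Type*} {l : Filter ι} {f : ι → ℝ} (K : ℝ)
    (h : ∀ η : ℝ, 0 < η → η ≤ 1 / 8 → ∀ᶠ x in l, |f x| ≤ η * K) : Tendsto f l (𝓝 0) := by
  rw [Metric.tendsto_nhds]
  intro ε hε
  have hK : 0 < |K| + 1 := by positivity
  have hη : 0 < min (1 / 8) (ε / (2 * (|K| + 1))) := by positivity
  filter_upwards [h _ hη (min_le_left _ _)] with x hx
  rw [Real.dist_eq, sub_zero]
  calc |f x| ≤ min (1 / 8) (ε / (2 * (|K| + 1))) * K := hx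
    _ ≤ min (1 / 8) (ε / (2 * (|K| + 1))) * (|K| + 1) := by
        gcongr
        linarith [le_abs_self K]
    _ ≤ ε / (2 * (|K| + 1)) * (|K| + 1) := by
        gcongr
        exact min_le_right _ _
    _ = ε / 2 := by field_simp
    _ < ε := by linarith

lemma max_half {l : Filter Cfg} (hl : Tendsto Sigma.fst l atTop) {d μ : ℕ → ℝ}
    {δ : (n : ℕ) → Fin n → ℝ} {C : ℝ} (S : Scal d μ δ C)
    {w : (x : Cfg) → Fin x.1 → ℝ} (H : Conc l d δ w) (η : ℝ) (hη : 0 < η) :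
    ∀ᶠ x in l, ∀ i, |w x i + 1 / 2| ≤ η * d x.1 := by
  filter_upwards [H.max_w hl S.hd (η / 2) (by positivity),
    hl.eventually (S.hd.eventually_ge_atTop (1 / η))] with x hx hd i
  have h1 : 1 ≤ η * d x.1 := by
    rw [div_le_iff₀ hη] at hd
    linarith
  refine (abs_add_le _ _).trans ?_
  rw [abs_of_pos (by norm_num : (0 : ℝ) < 1 / 2)]
  linarith [hx i]

lemma half_pow_four_le (w : ℝ) : (w + 1 / 2) ^ 4 ≤ 8 * w ^ 4 + 1 := by
  have := Even.add_pow_le (a := w) (b := 1 / 2) (n := 4) (by decide)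
  norm_num at this ⊢
  linarith

lemma half_pow_six_le (w : ℝ) : (w + 1 / 2) ^ 6 ≤ 32 * w ^ 6 + 1 := by
  have := Even.add_pow_le (a := w) (b := 1 / 2) (n := 6) (by decide)
  norm_num at this ⊢
  linarith

/-- Boundedness of `μ √n / d` and `n μ / d²`. -/
lemma rrho_bdd {l : Filter Cfg} (hl : Tendsto Sigma.fst l atTop) {d μ : ℕ → ℝ}
    {δ : (n : ℕ) → Fin n → ℝ} {C : ℝ} (S : Scal d μ δ C) :
    ∃ K : ℝ, 0 < K ∧ ∀ᶠ x in l, μ x.1 / d x.1 * √(x.1 : ℝ) ≤ K ∧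
      (x.1 : ℝ) * μ x.1 / d x.1 ^ 2 ≤ K := by
  obtain ⟨K, hK⟩ := S.hρ
  have hr : ∀ᶠ n : ℕ in atTop, μ n / d n * √n ≤ |C| + 1 :=
    S.hr.eventually_le_const (by linarith [le_abs_self C])
  refine ⟨(|C| + 1) * (|K| + 1), by positivity, ?_⟩
  filter_upwards [hl.eventually hK, hl.eventually hr, hl.eventually S.basic] with
    x h1 h2 ⟨hn, hd, hμ, h3, hD⟩
  have hd0 : 0 < d x.1 := by linarith
  have hs : (x.1 : ℝ) = √(x.1 : ℝ) ^ 2 := (Real.sq_sqrt (by positivity)).symm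
  have e : (x.1 : ℝ) * μ x.1 / d x.1 ^ 2 = (μ x.1 / d x.1 * √(x.1 : ℝ)) * (√(x.1 : ℝ) / d x.1) := by
    nth_rw 1 [hs]
    field_simp
  have h4 : √(x.1 : ℝ) / d x.1 ≤ |K| + 1 := by linarith [le_abs_self K, le_abs_self (√(x.1 : ℝ) / d x.1)]
  constructor
  · refine h2.trans ?_
    nlinarith [abs_nonneg C, abs_nonneg K]
  · rw [e]
    gcongr

lemma fourth_bdd {l : Filter Cfg} (hl : Tendsto Sigma.fst l atTop) {d μ : ℕ → ℝ}
    {δ : (n : ℕ) → Fin n → ℝ} {C : ℝ} (S : Scal d μ δ C)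
    {w : (x : Cfg) → Fin x.1 → ℝ} (H : Conc l d δ w) :
    ∃ K : ℝ, ∀ᶠ x in l, μ x.1 * (∑ i, (w x i + 1 / 2) ^ 4) / d x.1 ^ 4 ≤ K := by
  obtain ⟨K, hK0, hK⟩ := rrho_bdd hl S
  refine ⟨33 * K, ?_⟩
  filter_upwards [hK, hl.eventually S.basic, H.X4.eventually_le_const one_pos] with
    x ⟨h1, h2⟩ ⟨hn, hd, hμ, h3, hD⟩ h4
  have hd0 : 0 < d x.1 := by linarith
  have hs0 : 0 < √(x.1 : ℝ) := by positivity
  rw [div_le_iff₀ (by positivity)] at h4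
  have h5 : ∑ i, (w x i + 1 / 2) ^ 4 ≤ 8 * ∑ i, w x i ^ 4 + x.1 := by
    calc ∑ i, (w x i + 1 / 2) ^ 4 ≤ ∑ i, (8 * w x i ^ 4 + 1) :=
          Finset.sum_le_sum fun i _ => half_pow_four_le _
      _ = _ := by rw [Finset.sum_add_distrib, ← Finset.mul_sum]; simp
  have h6 : (x.1 : ℝ) ≤ x.1 * d x.1 ^ 2 := by
    have : 1 ≤ d x.1 ^ 2 := one_le_pow₀ hd
    have : (0 : ℝ) ≤ x.1 := by positivity
    nlinarith
  have h7 : ∑ i, (w x i + 1 / 2) ^ 4 ≤ 25 * (x.1 * d x.1 ^ 2) + 8 * (√(x.1 : ℝ) * d x.1 ^ 3) := by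
    linarith
  calc μ x.1 * (∑ i, (w x i + 1 / 2) ^ 4) / d x.1 ^ 4
      ≤ μ x.1 * (25 * (x.1 * d x.1 ^ 2) + 8 * (√(x.1 : ℝ) * d x.1 ^ 3)) / d x.1 ^ 4 := by gcongr
    _ = 25 * (x.1 * μ x.1 / d x.1 ^ 2) + 8 * (μ x.1 / d x.1 * √(x.1 : ℝ)) := by
        field_simp
    _ ≤ 33 * K := by linarith

/-- Replacing the integrals from `d - μ + u` to `d + u`, where `u = w + 1/2`, by their fourth order
expansions costs `o(1)` in total. -/
lemma T2_tendsto {l : Filter Cfg} (hl : Tendsto Sigma.fst l atTop) {d μ : ℕ → ℝ}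
    {δ : (n : ℕ) → Fin n → ℝ} {C : ℝ} (S : Scal d μ δ C)
    {w : (x : Cfg) → Fin x.1 → ℝ} (H : Conc l d δ w) :
    Tendsto (fun x : Cfg => ∑ i, (entH (d x.1 + (w x i + 1 / 2))
        - entH (d x.1 - μ x.1 + (w x i + 1 / 2)) - entH (d x.1) + entH (d x.1 - μ x.1) -
      (Real.log (d x.1 / (d x.1 - μ x.1)) * (w x i + 1 / 2)
        - (1 / (d x.1 - μ x.1) - 1 / d x.1) * (w x i + 1 / 2) ^ 2 / 2
        + (1 / (d x.1 - μ x.1) ^ 2 - 1 / d x.1 ^ 2) * (w x i + 1 / 2) ^ 3 / 6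
        - (1 / (d x.1 - μ x.1) ^ 3 - 1 / d x.1 ^ 3) * (w x i + 1 / 2) ^ 4 / 12))) l (𝓝 0) := by
  obtain ⟨K, hK⟩ := fourth_bdd hl S H
  refine tendsto_of_eta (64 * K) fun η hη hη4 => ?_
  filter_upwards [hK, hl.eventually S.basic, max_half hl S H η hη] with
    x h4 ⟨hn, hd, hμ, h3, hD⟩ hu
  have hd0 : 0 < d x.1 := by linarith
  have hD2 : d x.1 / 2 ≤ d x.1 - μ x.1 := by linarith
  refine (Finset.abs_sum_le_sum_abs _ _).trans ?_
  calc _ ≤ ∑ i, 64 * η * (μ x.1 * (w x i + 1 / 2) ^ 4 / d x.1 ^ 4) := by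
        refine Finset.sum_le_sum fun i _ => ?_
        have hui := hu i
        refine (entH_two_point hD (by linarith) (by nlinarith)).trans ?_
        generalize w x i + 1 / 2 = u at *
        rw [sub_sub_cancel]
        have h5 : |u| ^ 5 = |u| * u ^ 4 := by
          rw [pow_succ', Even.pow_abs (by decide : Even 4)]
        calc 2 * (|u| / (d x.1 - μ x.1)) ^ 5 * μ x.1
            ≤ 2 * (|u| / (d x.1 / 2)) ^ 5 * μ x.1 := by gcongr
          _ = 64 * (|u| * u ^ 4) / d x.1 ^ 5 * μ x.1 := by rw [← h5]; field_simp; norm_num; ring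
          _ ≤ 64 * ((η * d x.1) * u ^ 4) / d x.1 ^ 5 * μ x.1 := by
            gcongr
          _ = _ := by field_simp
    _ = η * (64 * (μ x.1 * (∑ i, (w x i + 1 / 2) ^ 4) / d x.1 ^ 4)) := by
        rw [← Finset.mul_sum, ← Finset.sum_div, ← Finset.mul_sum]
        ring
    _ ≤ η * (64 * K) := by gcongr

/-- The non-uniformity `δ` of the planting contributes `o(1)`: the first order terms are `∑ δ = 0`,
`∑ δ w` and `∑ δ w²`, and the rest is controlled by Cauchy–Schwarz and `∑ δ² = o(d)`. -/
lemma T3_tendsto {l : Filter Cfg} (hl : Tendsto Sigma.fst l atTop) {d μ : ℕ → ℝ}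
    {δ : (n : ℕ) → Fin n → ℝ} {C : ℝ} (S : Scal d μ δ C)
    {w : (x : Cfg) → Fin x.1 → ℝ} (H : Conc l d δ w) :
    Tendsto (fun x : Cfg => ∑ i, (entH (d x.1 - μ x.1 + (w x i + 1 / 2))
        - entH (d x.1 - μ x.1 + (w x i + 1 / 2) - δ x.1 i))) l (𝓝 0) := by
  have H6 : ∀ ε : ℕ → ℝ, Tendsto ε atTop (𝓝 0) →
      Tendsto (fun x : Cfg => ε x.1 * ((∑ i, (w x i + 1 / 2) ^ 6) / d x.1 ^ 5)) l (𝓝 0) := by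
    intro ε hε
    obtain ⟨K, hK⟩ := S.hρ
    have h := ((H.X6 ε hε).abs.const_mul 32).add ((hε.comp hl).abs.const_mul (K ^ 2))
    simp only [mul_zero, add_zero, abs_zero] at h
    refine squeeze_zero_norm' ?_ h
    filter_upwards [hl.eventually S.basic, hl.eventually hK] with x ⟨hn, hd, hμ, h3, hD⟩ hKx
    have hd0 : 0 < d x.1 := by linarith
    have p1 : 0 ≤ ∑ i, (w x i + 1 / 2) ^ 6 := Finset.sum_nonneg fun i _ => by positivity
    have p2 : 0 ≤ ∑ i, w x i ^ 6 := Finset.sum_nonneg fun i _ => by positivity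
    have h5 : ∑ i, (w x i + 1 / 2) ^ 6 ≤ 32 * ∑ i, w x i ^ 6 + x.1 := by
      calc ∑ i, (w x i + 1 / 2) ^ 6 ≤ ∑ i, (32 * w x i ^ 6 + 1) :=
            Finset.sum_le_sum fun i _ => half_pow_six_le _
        _ = _ := by rw [Finset.sum_add_distrib, ← Finset.mul_sum]; simp
    have h7 : (x.1 : ℝ) / d x.1 ^ 5 ≤ K ^ 2 := by
      calc (x.1 : ℝ) / d x.1 ^ 5 ≤ x.1 / d x.1 ^ 2 := by
            gcongr
            norm_num
        _ = |√(x.1 : ℝ) / d x.1| ^ 2 := by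
            rw [sq_abs, div_pow, Real.sq_sqrt (by positivity)]
        _ ≤ K ^ 2 := by gcongr
    simp only [Function.comp_apply]
    rw [Real.norm_eq_abs, abs_mul, abs_mul, abs_of_nonneg (div_nonneg p1 (by positivity)),
      abs_of_nonneg (div_nonneg p2 (by positivity))]
    calc |ε x.1| * ((∑ i, (w x i + 1 / 2) ^ 6) / d x.1 ^ 5)
        ≤ |ε x.1| * ((32 * ∑ i, w x i ^ 6 + x.1) / d x.1 ^ 5) := by gcongr
      _ = 32 * (|ε x.1| * ((∑ i, w x i ^ 6) / d x.1 ^ 5)) + x.1 / d x.1 ^ 5 * |ε x.1| := by ring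
      _ ≤ _ := by gcongr
  have hc := Conc.cross hl S H6
  have h := (hc.const_mul 16).add (((S.hδ2.comp hl).const_mul 8).add
    ((H.Y1.abs.const_mul 4).add (H.Y2.abs.const_mul 2)))
  simp only [mul_zero, add_zero, abs_zero] at h
  refine squeeze_zero_norm' ?_ h
  filter_upwards [hl.eventually S.basic, max_half hl S H (1 / 4) (by norm_num),
    hl.eventually (S.max_delta (1 / 8) (by norm_num))] with x ⟨hn, hd, hμ, h3, hD⟩ hu hδ
  have hd0 : 0 < d x.1 := by linarith
  have hD2 : d x.1 / 2 ≤ d x.1 - μ x.1 := by linarith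
  set D := d x.1 - μ x.1
  have hδs := S.hδ x.1
  have key : |∑ i, (entH (D + (w x i + 1 / 2)) - entH (D + (w x i + 1 / 2) - δ x.1 i) -
      (δ x.1 i * Real.log D + δ x.1 i * (w x i + 1 / 2) / D
        - δ x.1 i * (w x i + 1 / 2) ^ 2 / (2 * D ^ 2)))| ≤
      16 * ((∑ i, |δ x.1 i| * |w x i + 1 / 2| ^ 3) / d x.1 ^ 3)
        + 8 * ((∑ i, δ x.1 i ^ 2) / d x.1) := by
    refine (Finset.abs_sum_le_sum_abs _ _).trans ?_
    rw [Finset.sum_div, Finset.sum_div, Finset.mul_sum, Finset.mul_sum, ← Finset.sum_add_distrib]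
    refine Finset.sum_le_sum fun i _ => ?_
    refine (entH_shift hD (by linarith [hu i]) (by linarith [hδ i])).trans ?_
    calc _ ≤ 2 * (|δ x.1 i| * |w x i + 1 / 2| ^ 3) / (d x.1 / 2) ^ 3
          + 4 * δ x.1 i ^ 2 / (d x.1 / 2) := by gcongr
      _ = _ := by
        field_simp
        ring
  have e : ∑ i, (entH (D + (w x i + 1 / 2)) - entH (D + (w x i + 1 / 2) - δ x.1 i) -
      (δ x.1 i * Real.log D + δ x.1 i * (w x i + 1 / 2) / D
        - δ x.1 i * (w x i + 1 / 2) ^ 2 / (2 * D ^ 2))) =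
      ∑ i, (entH (D + (w x i + 1 / 2)) - entH (D + (w x i + 1 / 2) - δ x.1 i))
      - ((∑ i, δ x.1 i * w x i) / D - (∑ i, δ x.1 i * w x i ^ 2 + ∑ i, δ x.1 i * w x i)
        / (2 * D ^ 2)) := by
    have e1 : (∑ i, δ x.1 i * w x i) / D - (∑ i, δ x.1 i * w x i ^ 2 + ∑ i, δ x.1 i * w x i)
        / (2 * D ^ 2) = (∑ i, δ x.1 i) * (Real.log D + 1 / 2 / D - 1 / 4 / (2 * D ^ 2)) +
        ((∑ i, δ x.1 i * w x i) / D - (∑ i, δ x.1 i * w x i ^ 2 + ∑ i, δ x.1 i * w x i)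
        / (2 * D ^ 2)) := by rw [hδs]; ring
    rw [e1]
    simp only [Finset.sum_mul, Finset.sum_div, ← Finset.sum_add_distrib, ← Finset.sum_sub_distrib]
    exact Finset.sum_congr rfl fun i _ => by ring
  rw [e] at key
  have b1 : |(∑ i, δ x.1 i * w x i) / D - (∑ i, δ x.1 i * w x i ^ 2 + ∑ i, δ x.1 i * w x i)
        / (2 * D ^ 2)| ≤ 4 * |(∑ i, δ x.1 i * w x i) / d x.1|
          + 2 * |(∑ i, δ x.1 i * w x i ^ 2) / d x.1 ^ 2| := by
    generalize ∑ i, δ x.1 i * w x i = y1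
    generalize ∑ i, δ x.1 i * w x i ^ 2 = y2
    have f1 : |y1 / D| ≤ 2 * |y1 / d x.1| := by
      rw [abs_div, abs_div, abs_of_pos hD, abs_of_pos hd0]
      calc |y1| / D ≤ |y1| / (d x.1 / 2) := by gcongr
        _ = _ := by field_simp
    have f2 : |y2 / (2 * D ^ 2)| ≤ 2 * |y2 / d x.1 ^ 2| := by
      rw [abs_div, abs_div, abs_of_pos (by positivity : 0 < 2 * D ^ 2),
        abs_of_pos (by positivity : 0 < d x.1 ^ 2)]
      calc |y2| / (2 * D ^ 2) ≤ |y2| / (2 * (d x.1 / 2) ^ 2) := by gcongr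
        _ = _ := by field_simp
    have f3 : |y1 / (2 * D ^ 2)| ≤ 2 * |y1 / d x.1| := by
      rw [abs_div, abs_div, abs_of_pos (by positivity : 0 < 2 * D ^ 2), abs_of_pos hd0]
      calc |y1| / (2 * D ^ 2) ≤ |y1| / (2 * (d x.1 / 2) ^ 2) := by gcongr
        _ = 2 * (|y1| / (d x.1 * d x.1)) := by field_simp
        _ ≤ 2 * (|y1| / (d x.1 * 1)) := by gcongr
        _ = _ := by rw [mul_one]
    rw [add_div]
    rw [abs_le] at *
    constructor <;> linarith
  rw [Real.norm_eq_abs]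
  simp only [Function.comp_apply]
  rw [abs_le] at *
  constructor <;> linarith

/-! ### The log-likelihood ratio -/

/-- `log (PL_A(z) / ST(z))`, for configurations with `a ≤ z` and `∑ z = m`, written with falling
factorials; see `plProb_eq_exp`. -/
noncomputable def logLR (n m k : ℕ) (a z : Fin n → ℕ) : ℝ :=
  ∑ i, Real.log ((z i).descFactorial (a i)) - Real.log (m.descFactorial k) + k * Real.log n

lemma plProb_eq_exp {n m k : ℕ} (hn : 0 < n) {a z : Fin n → ℕ} (hk : ∑ i, a i = k)
    (hz : ∑ i, z i = m) (ha : ∀ i, a i ≤ z i) :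
    0 < stProb n m z ∧ plProb n m a z = stProb n m z * Real.exp (logLR n m k a z) := by
  have hn' : (0 : ℝ) < n := by exact_mod_cast hn
  have hkm : k ≤ m := by
    rw [← hk, ← hz]
    exact Finset.sum_le_sum fun i _ => ha i
  have hf : ∀ j : ℕ, (0 : ℝ) < (j.factorial : ℝ) := fun j => by exact_mod_cast j.factorial_pos
  have hdpos : ∀ i, (0 : ℝ) < ((z i).descFactorial (a i) : ℝ) := fun i => by
    exact_mod_cast Nat.descFactorial_pos.2 (ha i)
  have hmpos : (0 : ℝ) < (m.descFactorial k : ℝ) := by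
    exact_mod_cast Nat.descFactorial_pos.2 hkm
  have e1 : ∀ i, ((z i).factorial : ℝ) =
      ((z i - a i).factorial : ℝ) * ((z i).descFactorial (a i) : ℝ) := fun i => by
    exact_mod_cast (Nat.factorial_mul_descFactorial (ha i)).symm
  have e2 : (m.factorial : ℝ) = ((m - k).factorial : ℝ) * (m.descFactorial k : ℝ) := by
    exact_mod_cast (Nat.factorial_mul_descFactorial hkm).symm
  have hP1 : 0 < ∏ i, ((z i - a i).factorial : ℝ) := Finset.prod_pos fun i _ => hf _
  have hP2 : 0 < ∏ i, ((z i).descFactorial (a i) : ℝ) := Finset.prod_pos fun i _ => hdpos i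
  have est : stProb n m z = (((m - k).factorial : ℝ) * (m.descFactorial k : ℝ)) /
      ((∏ i, ((z i - a i).factorial : ℝ)) * ∏ i, ((z i).descFactorial (a i) : ℝ)) *
        ((n : ℝ)⁻¹ ^ (m - k) * (n : ℝ)⁻¹ ^ k) := by
    rw [stProb, if_pos hz, e2, ← Finset.prod_mul_distrib, ← pow_add, Nat.sub_add_cancel hkm]
    simp only [e1]
  have epl : plProb n m a z = ((m - k).factorial : ℝ) / (∏ i, ((z i - a i).factorial : ℝ)) *
      (n : ℝ)⁻¹ ^ (m - k) := by
    rw [plProb, if_pos ⟨hz, ha⟩, hk]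
  have eexp : Real.exp (logLR n m k a z) =
      (∏ i, ((z i).descFactorial (a i) : ℝ)) / (m.descFactorial k : ℝ) * (n : ℝ) ^ k := by
    rw [logLR, Real.exp_add, Real.exp_sub, ← Real.log_prod fun i _ => (hdpos i).ne',
      Real.exp_log hP2, Real.exp_log hmpos, ← Real.log_pow, Real.exp_log (by positivity)]
  have hfm := hf (m - k)
  constructor
  · rw [est]
    positivity
  · rw [epl, est, eexp, inv_pow (n : ℝ) k]
    field_simp

lemma planting_le {l : Filter Cfg} (hl : Tendsto Sigma.fst l atTop) {d μ : ℕ → ℝ}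
    {δ : (n : ℕ) → Fin n → ℝ} {C : ℝ} (S : Scal d μ δ C)
    {A : (n : ℕ) → Fin n → ℕ} (hδA : ∀ n i, (A n i : ℝ) = μ n + δ n i)
    {z : (x : Cfg) → Fin x.1 → ℕ} (H : Conc l d δ (fun x i => (z x i : ℝ) - d x.1)) :
    ∀ᶠ x in l, ∀ i, A x.1 i ≤ z x i := by
  filter_upwards [hl.eventually S.basic, hl.eventually (S.max_delta (1 / 8) (by norm_num)),
    H.max_w hl S.hd (1 / 8) (by norm_num)] with x ⟨hn, hd, hμ, h3, hD⟩ h1 h2 i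
  have h : (A x.1 i : ℝ) ≤ z x i := by
    rw [hδA]
    linarith [(abs_le.1 (h1 i)).2, (abs_le.1 (h2 i)).1]
  exact_mod_cast h

/-- The falling factorials of the bins are integrals of `log`, up to the midpoint corrections which sum
to `n μ / (24 d²) + o(1)`. -/
lemma T1_tendsto {l : Filter Cfg} (hl : Tendsto Sigma.fst l atTop) {d μ : ℕ → ℝ}
    {δ : (n : ℕ) → Fin n → ℝ} {C : ℝ} (S : Scal d μ δ C)
    {A : (n : ℕ) → Fin n → ℕ} (hδA : ∀ n i, (A n i : ℝ) = μ n + δ n i)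
    {z : (x : Cfg) → Fin x.1 → ℕ} (H : Conc l d δ (fun x i => (z x i : ℝ) - d x.1)) :
    Tendsto (fun x : Cfg => ∑ i, Real.log ((z x i).descFactorial (A x.1 i))
      - ∑ i, (entH (d x.1 + ((z x i : ℝ) - d x.1 + 1 / 2))
          - entH (d x.1 - μ x.1 + ((z x i : ℝ) - d x.1 + 1 / 2) - δ x.1 i))
      - x.1 * μ x.1 / (24 * d x.1 ^ 2)) l (𝓝 0) := by
  obtain ⟨K, hK0, hK⟩ := rrho_bdd hl S
  refine tendsto_of_eta (2 * K) fun η hη hη8 => ?_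
  filter_upwards [hK, hl.eventually S.basic, hl.eventually (S.max_delta (η / 4) (by positivity)),
    H.max_w hl S.hd (η / 4) (by positivity), planting_le hl S hδA H,
    hl.eventually (S.tau.eventually_le_const (show (0 : ℝ) < η / 4 by positivity)),
    hl.eventually (S.hd.eventually_ge_atTop (2 + 4 / η))]
    with x ⟨_, hKx⟩ ⟨hn, hd, hμ, h3, hD⟩ h1 h2 hle hτ hd2
  have hd0 : 0 < d x.1 := by linarith
  rw [div_le_iff₀ hd0] at hτ
  have h4η : 0 < 4 / η := by positivity
  have hd2' : 2 ≤ d x.1 := by linarith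
  have h4d : 4 / d x.1 ^ 2 ≤ η := by
    rw [div_le_iff₀ (by positivity)]
    have h5 : 4 / η * η = 4 := by field_simp
    nlinarith
  have hsumA : ∑ i, (A x.1 i : ℝ) = x.1 * μ x.1 := by
    simp only [hδA, Finset.sum_add_distrib, S.hδ]
    simp
  have e : ∑ i, Real.log ((z x i).descFactorial (A x.1 i))
      - ∑ i, (entH (d x.1 + ((z x i : ℝ) - d x.1 + 1 / 2))
          - entH (d x.1 - μ x.1 + ((z x i : ℝ) - d x.1 + 1 / 2) - δ x.1 i))
      - x.1 * μ x.1 / (24 * d x.1 ^ 2) =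
      ∑ i, (Real.log ((z x i).descFactorial (A x.1 i))
        - (entH (z x i + 1 / 2) - entH (z x i - A x.1 i + 1 / 2))
        - A x.1 i * (1 / (24 * d x.1 ^ 2))) := by
    have e1 : ∀ i, d x.1 + ((z x i : ℝ) - d x.1 + 1 / 2) = z x i + 1 / 2 := fun i => by ring
    have e2 : ∀ i, d x.1 - μ x.1 + ((z x i : ℝ) - d x.1 + 1 / 2) - δ x.1 i =
        z x i - A x.1 i + 1 / 2 := fun i => by rw [hδA]; ring
    simp only [e1, e2, Finset.sum_sub_distrib, ← Finset.sum_mul, hsumA]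
    ring
  rw [e]
  refine (Finset.abs_sum_le_sum_abs _ _).trans ?_
  calc _ ≤ ∑ i, (A x.1 i : ℝ) * ((η + 4 / d x.1 ^ 2) / d x.1 ^ 2) := by
        refine Finset.sum_le_sum fun i _ => ?_
        refine log_descFactorial_bound _ _ _ _ (hle i) fun y _ hy1 hy2 => ?_
        refine midErr_near hd2' hη (by linarith) ?_
        rw [hδA] at hy1
        have g1 := abs_le.1 (h1 i)
        have g2 := abs_le.1 (h2 i)
        rw [abs_le]
        have : 0 < η * d x.1 := by positivity
        constructor <;> linarith
    _ = (x.1 * μ x.1 / d x.1 ^ 2) * (η + 4 / d x.1 ^ 2) := by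
        rw [← Finset.sum_mul, hsumA]
        ring
    _ ≤ K * (η + η) := by gcongr
    _ = η * (2 * K) := by ring

/-- The logarithm of `m!/(m-k)! · n^(-k)` is, up to `o(1)`, `n` times the single-bin integral of `log` at the mean
load. -/
lemma big_tendsto {d μ : ℕ → ℝ} {δ : (n : ℕ) → Fin n → ℝ} {C : ℝ} (S : Scal d μ δ C)
    {m k : ℕ → ℕ} (hkm : ∀ n, k n ≤ m n)
    (hdm : ∀ n, d n = (m n : ℝ) / n) (hμk : ∀ n, μ n = (k n : ℝ) / n) :
    Tendsto (fun n : ℕ => Real.log ((m n).descFactorial (k n)) - k n * Real.log n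
      - n * (entH (d n) - entH (d n - μ n))) atTop (𝓝 0) := by
  have h := S.tau.const_mul 10
  rw [mul_zero] at h
  refine squeeze_zero_norm' ?_ h
  filter_upwards [S.basic] with n ⟨hn, hd, hμ, h3, hD⟩
  have hn0 : (0 : ℝ) < n := by exact_mod_cast hn
  have hn1 : (1 : ℝ) ≤ n := by exact_mod_cast hn
  have hd0 : 0 < d n := by linarith
  have em : (m n : ℝ) = n * d n := by rw [hdm]; field_simp
  have ek : (k n : ℝ) = n * μ n := by rw [hμk]; field_simp
  have hm0 : (0 : ℝ) < m n := by rw [em]; positivity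
  have hk0 : (0 : ℝ) < k n := by rw [ek]; positivity
  have hk1 : (1 : ℝ) ≤ k n := by
    have : 0 < k n := by exact_mod_cast hk0
    exact_mod_cast this
  have emk : (m n : ℝ) - k n = n * (d n - μ n) := by rw [em, ek]; ring
  have hmk0 : (0 : ℝ) < m n - k n := by rw [emk]; positivity
  have hlogs : (n : ℝ) * (entH (d n) - entH (d n - μ n)) =
      entH (m n) - entH (m n - k n) - k n * Real.log n := by
    rw [emk, em, ek]
    simp only [entH]
    rw [Real.log_mul hn0.ne' hd0.ne', Real.log_mul hn0.ne' hD.ne']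
    ring
  have hdesc := log_descFactorial_bound (m n) 0 (2 / ((m n : ℝ) - k n) ^ 2) (k n) (hkm n)
    fun y hy1 hy2 _ => by
      have hy0 : 0 < y := by linarith
      have hb := midErr_bound hy1
      have hy24 : 1 / y ^ 4 ≤ 1 / y ^ 2 := by
        gcongr
        norm_num
      have hy2' : 1 / (24 * y ^ 2) ≤ 1 / y ^ 2 := by
        gcongr
        nlinarith
      have hp : 0 < 1 / (24 * y ^ 2) := by positivity
      have hmy : 2 / y ^ 2 ≤ 2 / ((m n : ℝ) - k n) ^ 2 := by
        gcongr
        linarith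
      have e2 : 2 / y ^ 2 = 1 / y ^ 2 + 1 / y ^ 2 := by ring
      rw [sub_zero, abs_le]
      have hb' := abs_le.1 hb
      constructor <;> linarith
  rw [mul_zero, sub_zero] at hdesc
  have hB : (k n : ℝ) * (2 / ((m n : ℝ) - k n) ^ 2) ≤ 8 * (μ n / d n) := by
    have h5 : d n / 2 ≤ d n - μ n := by linarith
    rw [emk, ek]
    calc (n : ℝ) * μ n * (2 / (n * (d n - μ n)) ^ 2)
        ≤ n * μ n * (2 / (n * (d n / 2)) ^ 2) := by gcongr
      _ = 8 * (μ n / d n) / (n * d n) := by field_simp; norm_num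
      _ ≤ 8 * (μ n / d n) / 1 := by
          gcongr
          nlinarith
      _ = _ := by rw [div_one]
  have t1 := entH_tangent (a := (m n : ℝ) + 1 / 2) (b := m n) (by positivity) hm0
  have t2 := entH_tangent (a := (m n : ℝ)) (b := m n + 1 / 2) hm0 (by positivity)
  have t3 := entH_tangent (a := (m n : ℝ) - k n + 1 / 2) (b := m n - k n) (by positivity) hmk0
  have t4 := entH_tangent (a := (m n : ℝ) - k n) (b := m n - k n + 1 / 2) hmk0 (by positivity)
  have l1 : Real.log ((m n : ℝ) - k n + 1 / 2) ≤ Real.log (m n) :=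
    Real.log_le_log (by positivity) (by linarith)
  have l2 : Real.log ((m n : ℝ) + 1 / 2) - Real.log ((m n : ℝ) - k n) ≤ 4 * (μ n / d n) := by
    rw [← Real.log_div (by positivity) hmk0.ne']
    refine (Real.log_le_sub_one_of_pos (by positivity)).trans ?_
    have : ((m n : ℝ) + 1 / 2) / (m n - k n) - 1 = (k n + 1 / 2) / (m n - k n) := by
      field_simp
      ring
    rw [this]
    calc ((k n : ℝ) + 1 / 2) / (m n - k n) ≤ (2 * k n) / (m n / 2) := by
          gcongr
          · linarith
          · rw [emk, em]; nlinarith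
      _ = 4 * (μ n / d n) := by rw [ek, em]; field_simp; norm_num
  rw [Real.norm_eq_abs, hlogs]
  have hdesc' := abs_le.1 hdesc
  ring_nf at t1 t2 t3 t4 hdesc' hB l1 l2 ⊢
  rw [abs_le]
  constructor <;> linarith

/-- On typical configurations the log-likelihood ratio is `(μ_F - F_A) / 2 + o(1)`. -/
lemma logLR_tendsto {l : Filter Cfg} (hl : Tendsto Sigma.fst l atTop) {d μ : ℕ → ℝ}
    {δ : (n : ℕ) → Fin n → ℝ} {C : ℝ} (S : Scal d μ δ C)
    {A : (n : ℕ) → Fin n → ℕ} (hδA : ∀ n i, (A n i : ℝ) = μ n + δ n i)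
    {m k : ℕ → ℕ} (hkm : ∀ n, k n ≤ m n)
    (hdm : ∀ n, d n = (m n : ℝ) / n) (hμk : ∀ n, μ n = (k n : ℝ) / n)
    {z : (x : Cfg) → Fin x.1 → ℕ} (hz : ∀ᶠ x in l, ∑ i, z x i = m x.1)
    (H : Conc l d δ (fun x i => (z x i : ℝ) - d x.1)) :
    Tendsto (fun x : Cfg => logLR x.1 (m x.1) (k x.1) (A x.1) (z x)
      + FStat x.1 (m x.1) (A x.1) (z x) / 2 - muF x.1 (m x.1) (k x.1) / 2) l (𝓝 0) := by
  have h := ((((T1_tendsto hl S hδA H).add (T2_tendsto hl S H)).add (T3_tendsto hl S H)).sub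
    ((big_tendsto S hkm hdm hμk).comp hl)).add
    ((main_tendsto hl S H).add (H.Y2.const_mul (1 / 2)))
  simp only [mul_zero, add_zero, sub_zero] at h
  refine Tendsto.congr' ?_ h
  filter_upwards [hl.eventually S.basic, hz] with x ⟨hn, hd, hμ, h3, hD⟩ hzx
  have hn0 : (0 : ℝ) < x.1 := by exact_mod_cast hn
  have hd0 : 0 < d x.1 := by linarith
  have em : (m x.1 : ℝ) = x.1 * d x.1 := by rw [hdm]; field_simp
  have ek : (k x.1 : ℝ) = x.1 * μ x.1 := by rw [hμk]; field_simp
  have emu : muF x.1 (m x.1) (k x.1) =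
      x.1 * (μ x.1 / d x.1) - x.1 * (μ x.1 / d x.1) ^ 2 / 2 := by
    rw [muF, em, ek]
    field_simp
  have eF : FStat x.1 (m x.1) (A x.1) (z x) =
      μ x.1 / d x.1 ^ 2 * (∑ i, ((z x i : ℝ) - d x.1) ^ 2)
      + (∑ i, δ x.1 i * ((z x i : ℝ) - d x.1) ^ 2) / d x.1 ^ 2 := by
    rw [FStat, Finset.mul_sum, Finset.sum_div, ← Finset.sum_add_distrib]
    refine Finset.sum_congr rfl fun i _ => ?_
    rw [qStat, hδA, ← hdm, em]
    field_simp
  have hw : ∑ i, ((z x i : ℝ) - d x.1) = 0 := by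
    have : ∑ i, (z x i : ℝ) = m x.1 := by exact_mod_cast hzx
    rw [Finset.sum_sub_distrib, this, em]
    simp
  rw [logLR, emu, eF]
  have u1 : ∑ i, ((z x i : ℝ) - d x.1 + 1 / 2) = x.1 / 2 := by
    rw [Finset.sum_add_distrib, hw]
    simp
    ring
  have u2 : ∑ i, ((z x i : ℝ) - d x.1 + 1 / 2) ^ 2 =
      ∑ i, ((z x i : ℝ) - d x.1) ^ 2 + x.1 / 4 := by
    have e : ∀ w : ℝ, (w + 1 / 2) ^ 2 = w ^ 2 + w + 1 / 4 := fun w => by ring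
    simp only [e, Finset.sum_add_distrib, hw]
    simp
    ring
  have u3 : ∑ i, ((z x i : ℝ) - d x.1 + 1 / 2) ^ 3 =
      ∑ i, ((z x i : ℝ) - d x.1) ^ 3 + 3 / 2 * ∑ i, ((z x i : ℝ) - d x.1) ^ 2 + x.1 / 8 := by
    have e : ∀ w : ℝ, (w + 1 / 2) ^ 3 = w ^ 3 + 3 / 2 * w ^ 2 + 3 / 4 * w + 1 / 8 :=
      fun w => by ring
    simp only [e, Finset.sum_add_distrib, ← Finset.mul_sum, hw]
    simp
    ring
  have u4 : ∑ i, ((z x i : ℝ) - d x.1 + 1 / 2) ^ 4 =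
      ∑ i, ((z x i : ℝ) - d x.1) ^ 4 + 2 * ∑ i, ((z x i : ℝ) - d x.1) ^ 3
        + 3 / 2 * ∑ i, ((z x i : ℝ) - d x.1) ^ 2 + x.1 / 16 := by
    have e : ∀ w : ℝ, (w + 1 / 2) ^ 4 = w ^ 4 + 2 * w ^ 3 + 3 / 2 * w ^ 2 + 1 / 2 * w + 1 / 16 :=
      fun w => by ring
    simp only [e, Finset.sum_add_distrib, ← Finset.mul_sum, hw]
    simp
    ring
  simp only [Function.comp_apply]
  generalize (∑ i, ((z x i : ℝ) - d x.1) ^ 2) = S2 at *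
  generalize (∑ i, ((z x i : ℝ) - d x.1) ^ 3) = S3 at *
  generalize (∑ i, ((z x i : ℝ) - d x.1) ^ 4) = S4 at *
  generalize (∑ i, δ x.1 i * ((z x i : ℝ) - d x.1) ^ 2) = Y at *
  obtain ⟨u, hu⟩ : ∃ u : Fin x.1 → ℝ, ∀ i, (z x i : ℝ) - d x.1 + 1 / 2 = u i := ⟨_, fun _ => rfl⟩
  simp only [hu] at *
  simp only [Finset.sum_sub_distrib, Finset.sum_add_distrib, ← Finset.sum_div, ← Finset.mul_sum,
    u1, u2, u3, u4, Finset.sum_const, Finset.card_univ, Fintype.card_fin, nsmul_eq_mul]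
  ring

/-- Typical configurations are classified correctly by the threshold test. -/
lemma good_eventually {l : Filter Cfg} (hl : Tendsto Sigma.fst l atTop) {d μ : ℕ → ℝ}
    {δ : (n : ℕ) → Fin n → ℝ} {C : ℝ} (S : Scal d μ δ C)
    {A : (n : ℕ) → Fin n → ℕ} (hδA : ∀ n i, (A n i : ℝ) = μ n + δ n i)
    {m k : ℕ → ℕ} (hka : ∀ n, ∑ i, A n i = k n) (hkm : ∀ n, k n ≤ m n)
    (hdm : ∀ n, d n = (m n : ℝ) / n) (hμk : ∀ n, μ n = (k n : ℝ) / n)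
    {z : (x : Cfg) → Fin x.1 → ℕ} (hz : ∀ᶠ x in l, ∑ i, z x i = m x.1)
    (H : Conc l d δ (fun x i => (z x i : ℝ) - d x.1)) {ε : ℝ} (hε : 0 < ε) :
    ∀ᶠ x in l, z x ∈ {z | (FStat x.1 (m x.1) (A x.1) z ≥ muF x.1 (m x.1) (k x.1) + ε →
                stProb x.1 (m x.1) z > plProb x.1 (m x.1) (A x.1) z) ∧
             (FStat x.1 (m x.1) (A x.1) z ≤ muF x.1 (m x.1) (k x.1) - ε →
                plProb x.1 (m x.1) (A x.1) z > stProb x.1 (m x.1) z)} := by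
  have hL := logLR_tendsto hl S hδA hkm hdm hμk hz H
  filter_upwards [hl.eventually S.basic, hz, planting_le hl S hδA H,
    hL.eventually_lt_const (show (0 : ℝ) < ε / 4 by positivity),
    hL.eventually_const_lt (show -(ε / 4) < (0 : ℝ) by linarith)] with x ⟨hn, _⟩ hzx hle h1 h2
  obtain ⟨hst, hpl⟩ := plProb_eq_exp hn (hka x.1) hzx hle
  simp only [hpl]
  constructor
  · intro hF
    have : Real.exp (logLR x.1 (m x.1) (k x.1) (A x.1) (z x)) < 1 :=
      Real.exp_lt_one_iff.2 (by linarith)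
    nlinarith
  · intro hF
    have : 1 < Real.exp (logLR x.1 (m x.1) (k x.1) (A x.1) (z x)) :=
      Real.one_lt_exp_iff.2 (by linarith)
    nlinarith

/-- The planted law is the standard law with `m - k` balls, translated by the planting; hence its
deviations from the mean load are typical as well. -/
lemma conc_planted {A : (n : ℕ) → Fin n → ℕ} {m k : ℕ → ℕ} (hkm : ∀ n, k n ≤ m n) {C : ℝ}
    (S : Scal (fun n => (m n : ℝ) / n) (fun n => (k n : ℝ) / n)
      (fun n i => (A n i : ℝ) - (k n : ℝ) / n) C) :
    Conc (ballFilter fun n => m n - k n) (fun n => (m n : ℝ) / n)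
      (fun n i => (A n i : ℝ) - (k n : ℝ) / n)
      (fun x i => ((A x.1 i + x.2 i : ℕ) : ℝ) - (m x.1 : ℝ) / x.1) := by
  have hl := tendsto_fst_ballFilter (fun n => m n - k n)
  obtain ⟨K, hK⟩ := S.hρ
  have half : ∀ᶠ n : ℕ in atTop, 1 ≤ (m n : ℝ) / n ∧
      (m n : ℝ) / n / 2 ≤ (m n : ℝ) / n - (k n : ℝ) / n := by
    filter_upwards [S.basic] with n ⟨_, h1, _, h3, _⟩
    exact ⟨h1, by linarith⟩
  have H : Conc (ballFilter fun n => m n - k n) (fun n => (m n : ℝ) / n - (k n : ℝ) / n)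
      (fun n i => (A n i : ℝ) - (k n : ℝ) / n)
      (fun x i => (x.2 i : ℝ) - ((m x.1 : ℝ) / x.1 - (k x.1 : ℝ) / x.1)) := by
    refine conc_ball (fun n => m n - k n) (fun n => (m n : ℝ) / n - (k n : ℝ) / n) ?_ ?_
      (2 * K) ?_ _ S.hδ ?_
    · intro n
      rw [Nat.cast_sub (hkm n)]
      ring
    · refine tendsto_atTop_mono' _ ?_ (S.hd.atTop_div_const (show (0 : ℝ) < 2 by norm_num))
      filter_upwards [half] with n h using h.2
    · filter_upwards [half, hK] with n ⟨h1, h2⟩ h3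
      rw [abs_of_nonneg (by positivity)] at h3
      rw [abs_of_nonneg (div_nonneg (by positivity) (by linarith))]
      calc √(n : ℝ) / ((m n : ℝ) / n - (k n : ℝ) / n) ≤ √(n : ℝ) / ((m n : ℝ) / n / 2) := by
            gcongr
        _ = 2 * (√(n : ℝ) / ((m n : ℝ) / n)) := by
            generalize (m n : ℝ) / n = t at *
            field_simp
        _ ≤ 2 * K := by gcongr
    · have h := S.hδ2.const_mul 2
      rw [mul_zero] at h
      refine squeeze_zero' ?_ ?_ h
      · filter_upwards [half] with n ⟨h1, h2⟩
        exact div_nonneg (Finset.sum_nonneg fun i _ => sq_nonneg _) (by linarith)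
      · filter_upwards [half] with n ⟨h1, h2⟩
        generalize hs : (∑ i, ((A n i : ℝ) - (k n : ℝ) / n) ^ 2) = s
        have hs0 : 0 ≤ s := hs ▸ Finset.sum_nonneg fun i _ => sq_nonneg _
        calc s / ((m n : ℝ) / n - (k n : ℝ) / n) ≤ s / ((m n : ℝ) / n / 2) := by gcongr
          _ = 2 * (s / ((m n : ℝ) / n)) := by
            generalize (m n : ℝ) / n = t at *
            field_simp
  have H2 := (H.rescale hl S).shift hl S
  convert H2 using 3
  push_cast
  ring

/-- Flat regime: whp under both ST and PL, the threshold strategy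
based on `F_A` agrees with the optimal likelihood comparison. -/
theorem flat_regime_optimal (A : (n : ℕ) → Fin n → ℕ) (m k : ℕ → ℕ)
    (hka : ∀ n, ∑ i, A n i = k n) (hkm : ∀ n, k n ≤ m n)
    (hk : Tendsto (fun n : ℕ => (k n : ℝ) / Real.sqrt n) atTop atTop)
    (c : ℝ) (hc : 0 < c) (hreg : FlatRegime A m k c)
    (ε : ℝ) (hε : 0 < ε) :
    Tendsto (fun n : ℕ => probOf (stProb n (m n))
        {z | (FStat n (m n) (A n) z ≥ muF n (m n) (k n) + ε →
                stProb n (m n) z > plProb n (m n) (A n) z) ∧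
             (FStat n (m n) (A n) z ≤ muF n (m n) (k n) - ε →
                plProb n (m n) (A n) z > stProb n (m n) z)})
      atTop (𝓝 1) ∧
    Tendsto (fun n : ℕ => probOf (plProb n (m n) (A n))
        {z | (FStat n (m n) (A n) z ≥ muF n (m n) (k n) + ε →
                stProb n (m n) z > plProb n (m n) (A n) z) ∧
             (FStat n (m n) (A n) z ≤ muF n (m n) (k n) - ε →
                plProb n (m n) (A n) z > stProb n (m n) z)})
      atTop (𝓝 1) := by
  have S := scal_of_flat A m k hka c hc hreg
  have hδA : ∀ n i, (A n i : ℝ) = (k n : ℝ) / n + ((A n i : ℝ) - (k n : ℝ) / n) :=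
    fun n i => by ring
  constructor
  · have hl := tendsto_fst_ballFilter m
    obtain ⟨K, hK⟩ := S.hρ
    have H := conc_ball m (fun n => (m n : ℝ) / n) (fun _ => rfl) S.hd K hK _ S.hδ S.hδ2
    have hg := good_eventually hl S hδA hka hkm (fun _ => rfl) (fun _ => rfl)
      (eventually_sum_eq m) H hε
    refine Tendsto.congr' ?_ (mem_ballFilter.1 hg)
    filter_upwards [eventually_gt_atTop 0] with n hn
    rw [probOf_stProb n (m n) hn]
    rfl
  · have hl := tendsto_fst_ballFilter fun n => m n - k n
    have hz : ∀ᶠ x in ballFilter (fun n => m n - k n), ∑ i, (A x.1 i + x.2 i) = m x.1 := by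
      filter_upwards [eventually_sum_eq fun n => m n - k n] with x hx
      rw [Finset.sum_add_distrib, hka, hx, Nat.add_sub_cancel' (hkm _)]
    have hg := good_eventually hl S hδA hka hkm (fun _ => rfl) (fun _ => rfl)
      (z := fun x i => A x.1 i + x.2 i) hz (conc_planted hkm S) hε
    refine Tendsto.congr' ?_ (mem_ballFilter.1 hg)
    filter_upwards [eventually_gt_atTop 0] with n hn
    rw [probOf_plProb n (m n) hn (A n) (by rw [hka]; exact hkm n), hka]
    rfl
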